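/- If Th(M₀) is an Ehrenfeucht theory, i.e., it has only finitely many countable models up to isomorphism, then Th(U) is also an Ehrenfeucht theory; in fact the number of countable models of Th(U) up to isomorphism is at most the number of countable models of Th(M₀) up to isomorphism. -/

import Mathlib

universe u

open FirstOrder FirstOrder.Language FirstOrder.Language.Structure CategoryTheory

namespace Ivanov

/-- The relation symbols of the finite language `L`:
four unary symbols `P`, `Q`, `λ`, `ρ`, a binary `H` and a 4-ary `S`. -/
inductive LRel : ℕ → Type
  | P : LRel 1
  | Q : LRel 1
  | lam : LRel 1
  | rho : LRel 1
  | H : LRel 2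
  | S : LRel 4

/-- The finite language `L`. -/
def L : Language := ⟨fun _ => Empty, LRel⟩

/-- The relational language having a relation symbol `Rₙ` of arity `ar n` for each
index `n ∈ s` with `0 < n`. -/
def L0r (ar : ℕ → ℕ) (s : Set ℕ) : Language :=
  ⟨fun _ => Empty, fun k => {n : ℕ // 0 < n ∧ n ∈ s ∧ ar n = k}⟩

/-- The relation symbol `Rₙ`. -/
def R (ar : ℕ → ℕ) (s : Set ℕ) (n : ℕ) (h1 : 0 < n) (h2 : n ∈ s) :
    (L0r ar s).Relations (ar n) := ⟨n, h1, h2, rfl⟩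

/-- The language `L ∪ L₀`. -/
def LFull (ar : ℕ → ℕ) (s : Set ℕ) : Language := L.sum (L0r ar s)

instance (ar : ℕ → ℕ) (s : Set ℕ) (n : ℕ) : IsEmpty ((LFull ar s).Functions n) :=
  ⟨fun f => Sum.elim Empty.elim Empty.elim f⟩

instance (ar : ℕ → ℕ) (s : Set ℕ) (n : ℕ) : IsEmpty ((L0r ar s).Functions n) :=
  ⟨fun f => Empty.elim f⟩

section

variable (ar : ℕ → ℕ) (s : Set ℕ) {M : Type u} [(LFull ar s).Structure M]

/-- `x` satisfies the unary predicate `P`. -/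
def isP (x : M) : Prop := RelMap (L := LFull ar s) (n := 1) (Sum.inl LRel.P) ![x]

/-- `x` satisfies the unary predicate `Q`. -/
def isQ (x : M) : Prop := RelMap (L := LFull ar s) (n := 1) (Sum.inl LRel.Q) ![x]

/-- `x` satisfies the unary predicate `λ`. -/
def isLam (x : M) : Prop := RelMap (L := LFull ar s) (n := 1) (Sum.inl LRel.lam) ![x]

/-- `x` satisfies the unary predicate `ρ`. -/
def isRho (x : M) : Prop := RelMap (L := LFull ar s) (n := 1) (Sum.inl LRel.rho) ![x]

/-- the binary predicate `H`. -/
def isH (x y : M) : Prop := RelMap (L := LFull ar s) (n := 2) (Sum.inl LRel.H) ![x, y]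

/-- the 4-ary predicate `S`. -/
def isS (x y z w : M) : Prop := RelMap (L := LFull ar s) (n := 4) (Sum.inl LRel.S) ![x, y, z, w]

/-- The basic conditions on the `(L ∪ L₀)`-structures under consideration: `P` and `Q`
partition the universe, `λ`, `ρ`, `H` hold only on `Q`, the `Rₙ` hold only on tuples from `P`,
and `S(a,b,c,d)` implies `a, c ∈ P`, `b, d ∈ Q`. -/
structure IsGood (M : Type u) [(LFull ar s).Structure M] : Prop where
  part : ∀ x : M, isP ar s x ∨ isQ ar s x
  not_both : ∀ x : M, ¬(isP ar s x ∧ isQ ar s x)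
  lam_q : ∀ x : M, isLam ar s x → isQ ar s x
  rho_q : ∀ x : M, isRho ar s x → isQ ar s x
  h_q : ∀ x y : M, isH ar s x y → isQ ar s x ∧ isQ ar s y
  r_p : ∀ (k : ℕ) (r : (L0r ar s).Relations k) (t : Fin k → M),
    RelMap (L := LFull ar s) (n := k) (Sum.inr r) t → ∀ i, isP ar s (t i)
  s_pq : ∀ x y z w : M, isS ar s x y z w →
    isP ar s x ∧ isQ ar s y ∧ isP ar s z ∧ isQ ar s w

/-- `(a, c)` is an `n`-pair of arity `m` (labelling the tuple `a`). -/
structure IsNPair {M : Type u} [(LFull ar s).Structure M] (n m : ℕ)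
    (a : Fin m → M) (c : Fin n → M) : Prop where
  le : m ≤ n
  aP : ∀ i, isP ar s (a i)
  cQ : ∀ j, isQ ar s (c j)
  inj : Function.Injective c
  hH : ∀ i j : Fin n, isH ar s (c i) (c j) ↔ (j : ℕ) = ((i : ℕ) + 1) % n
  hlam : ∀ i : Fin n, isLam ar s (c i) ↔ (i : ℕ) = 0
  hrho : ∀ i : Fin n, isRho ar s (c i) ↔ (i : ℕ) = m - 1
  hS : ∀ (i k : Fin m) (j l : Fin n),
    isS ar s (a i) (c j) (a k) (c l) ↔ a i = a k

/-- The induced structure on a subset of a structure in a relational language. -/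
def inducedStr (A : Set M) : (LFull ar s).Structure A where
  funMap := fun {_} f _ => isEmptyElim f
  RelMap := fun {_} r t => RelMap r fun i => (t i : M)

end

/-- The `P`-part of a structure. -/
abbrev Ppart (ar : ℕ → ℕ) (s : Set ℕ) (M : Type u) [(LFull ar s).Structure M] : Type u :=
  {x : M // isP ar s x}

/-- The `L₀`-structure induced on the `P`-part by the relations `Rₙ`. -/
instance PpartStr (ar : ℕ → ℕ) (s : Set ℕ) (M : Type u) [(LFull ar s).Structure M] :
    (L0r ar s).Structure (Ppart ar s M) where
  funMap := fun {_} f _ => isEmptyElim f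
  RelMap := fun {_} r t => RelMap (L := LFull ar s) (Sum.inr r) fun i => (t i : M)

/-- The class `K` of all finite `(L ∪ L₀)`-structures `D` satisfying the basic conditions,
whose `P`-part is isomorphic to a substructure of `M₀`, and in which, for every `n`, every
`n`-pair whose arity equals the arity of `Rₙ` labels a tuple satisfying `Rₙ`. -/
def Kclass (ar : ℕ → ℕ) (s : Set ℕ) (M₀ : Type u) [(L0r ar s).Structure M₀] :
    Set (Bundled.{u} (LFull ar s).Structure) :=
  {D | Finite D ∧ IsGood ar s D ∧
    Nonempty (Ppart ar s D ↪[L0r ar s] M₀) ∧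
    ∀ (n : ℕ) (h1 : 0 < n) (h2 : n ∈ s) (a : Fin (ar n) → D) (c : Fin n → D),
      IsNPair ar s n (ar n) a c →
        RelMap (L := LFull ar s) (n := ar n) (Sum.inr (R ar s n h1 h2)) a}
/-- The index set `{n : 1 ≤ n ≤ N}` of a finite sublanguage `L_i`. -/
def setLe (N : ℕ) : Set ℕ := {n | n ≤ N}

/-- The inclusion of sublanguages of `L₀`. -/
def L0incl (ar : ℕ → ℕ) {s t : Set ℕ} (h : s ⊆ t) : L0r ar s →ᴸ L0r ar t where
  onFunction := fun {_} f => f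
  onRelation := fun {_} r => ⟨r.1, r.2.1, h r.2.2.1, r.2.2.2⟩

/-- The inclusion `L ∪ L_i → L ∪ L_j` of sublanguages of `L ∪ L₀`. -/
def LFullincl (ar : ℕ → ℕ) {s t : Set ℕ} (h : s ⊆ t) : LFull ar s →ᴸ LFull ar t :=
  (LHom.id L).sumMap (L0incl ar h)

/-- The `L_i`-reduct structure on `M₀` (`L_i` given by the cutoff `N`). -/
def M0redStr (ar : ℕ → ℕ) (N : ℕ) (M₀ : Type u) [(L0r ar Set.univ).Structure M₀] :
    (L0r ar (setLe N)).Structure M₀ :=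
  (L0incl ar (Set.subset_univ _)).reduct M₀

/-- The class `K_i` of finite `(L ∪ L_i)`-structures (`L_i` given by the cutoff `N`). -/
def Ksub (ar : ℕ → ℕ) (N : ℕ) (M₀ : Type u) [(L0r ar Set.univ).Structure M₀] :
    Set (Bundled.{u} (LFull ar (setLe N)).Structure) :=
  letI := M0redStr ar N M₀
  Kclass ar (setLe N) M₀

/-! A type of a finite tuple of `M₀` in the language `L_i` is quantifier-free, so back-and-forth can
be played at each level separately. Hence the `P`-part of every model of `Th(U)` is a model of
`Th(M₀)`, and it is enough to show that a countable model of `Th(U)` is determined by its `P`-part.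

Let `σ` be an isomorphism between the `P`-parts of two countable models, and extend it to the models
by back-and-forth. A finite stage controls only finitely many of the relations `Rₙ`, so a point
`σ p` which has to be matched over a finite tuple `b` can be prescribed only up to a basic set: the
realisations of a quantifier-free type of some level over a finite tuple. This suffices if the orbit
of `σ p` under the automorphisms of the `P`-part fixing `b` contains a basic set, for then `σ` can
be corrected by such an automorphism. The points for which this fails, those with a thin orbit, are
put into the correspondence at the outset, which is possible if there are only finitely many.

That is where the number of countable models of `Th(M₀)` enters. An orbit is approximated by the
back-and-forth equivalences of countable ordinal ranks. If infinitely many points were thin at ranks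
below `α`, then for every `m` a forcing construction would yield a countable model of `Th(M₀)` in
which `m + 1` of them persist with thin orbits. A generic sequence also decides which tuples of the
finitely many given models can realise its promises, and since the new model is one of these, all
but finitely many of its points with a thin orbit are already thin at ranks below some `β < α`. By
induction on the rank it has finitely many points with a thin orbit, but more than `m`. For `m` at
least the sizes of all such finite sets in the given models, this is a contradiction. -/

/-! ### Graded languages and ordinal back-and-forth -/

open scoped Ordinal

/-- A grading of a relational language by finite levels: the relation symbols of level at most `k`
play the role of the `k`-th member of an increasing chain of finite sublanguages. -/
structure Grading (𝓛 : FirstOrder.Language.{0, 0}) where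
  level : ∀ {n}, 𝓛.Relations n → ℕ
  finite_level_le : ∀ k, Finite {r : Σ n, 𝓛.Relations n // level r.2 ≤ k}

/-- The tuple `a ⌢ c` obtained from `a : ι → M` by adding the entry `c` at the new index `none`. -/
def adjoin {ι : Type} {M : Type*} (a : ι → M) (c : M) : Option ι → M := fun o => o.elim c a

infixl:95 " ⌢ " => adjoin

section adjoin

variable {ι ι' : Type} {M N : Type*} (a : ι → M) (c : M)

@[simp] theorem adjoin_some (i : ι) : (a ⌢ c) (some i) = a i := rfl

@[simp] theorem adjoin_none : (a ⌢ c) none = c := rfl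

theorem adjoin_comp_map (f : ι' → ι) : a ⌢ c ∘ Option.map f = (a ∘ f) ⌢ c := by
  funext o; cases o <;> rfl

theorem comp_adjoin (f : M → N) : f ∘ a ⌢ c = (f ∘ a) ⌢ f c := by
  funext o; cases o <;> rfl

end adjoin

namespace Grading

variable {𝓛 : FirstOrder.Language.{0, 0}} (G : Grading 𝓛)
variable {M M' M'' : Type u} [𝓛.Structure M] [𝓛.Structure M'] [𝓛.Structure M'']
variable {ι ι' : Type}

/-- The tuples `a` and `b` have the same quantifier-free type in the language of level `k`. -/
structure QFEq (k : ℕ) (a : ι → M) (b : ι → M') : Prop where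
  eq_iff : ∀ i j, a i = a j ↔ b i = b j
  rel_iff : ∀ {n} (r : 𝓛.Relations n), G.level r ≤ k → ∀ t : Fin n → ι,
    RelMap r (a ∘ t) ↔ RelMap r (b ∘ t)

namespace QFEq

variable {G} {k : ℕ} {a : ι → M} {b : ι → M'} {c : ι → M''}

theorem refl (k : ℕ) (a : ι → M) : G.QFEq k a a :=
  ⟨fun _ _ => Iff.rfl, fun _ _ _ => Iff.rfl⟩

theorem symm (h : G.QFEq k a b) : G.QFEq k b a :=
  ⟨fun i j => (h.eq_iff i j).symm, fun r hr t => (h.rel_iff r hr t).symm⟩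

theorem trans (h : G.QFEq k a b) (h' : G.QFEq k b c) : G.QFEq k a c :=
  ⟨fun i j => (h.eq_iff i j).trans (h'.eq_iff i j),
    fun r hr t => (h.rel_iff r hr t).trans (h'.rel_iff r hr t)⟩

theorem reindex (h : G.QFEq k a b) (f : ι' → ι) : G.QFEq k (a ∘ f) (b ∘ f) :=
  ⟨fun _ _ => h.eq_iff _ _, fun r hr t => h.rel_iff r hr (f ∘ t)⟩

theorem mono {k' : ℕ} (hk : k' ≤ k) (h : G.QFEq k a b) : G.QFEq k' a b :=
  ⟨h.eq_iff, fun r hr => h.rel_iff r (hr.trans hk)⟩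

end QFEq

theorem qfEq_comp {F : Type*} [FunLike F M M'] [EmbeddingLike F M M'] [StrongHomClass 𝓛 F M M']
    (f : F) (k : ℕ) (a : ι → M) : G.QFEq k a (f ∘ a) :=
  ⟨fun _ _ => (EmbeddingLike.injective f).eq_iff.symm,
    fun r _ t => (StrongHomClass.map_rel f r (a ∘ t)).symm⟩

/-- One-sided ordinal back-and-forth: every infinitary `Π`-condition of rank `α` true of `a` is
true of `b`. Level `k` relations are taken into account from rank `k` on. -/
def BackForthLE (α : Ordinal.{0}) {M M' : Type u} [𝓛.Structure M] [𝓛.Structure M'] {ι : Type}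
    (a : ι → M) (b : ι → M') : Prop :=
  (∀ k : ℕ, (k : Ordinal) ≤ α → G.QFEq k a b) ∧
    ∀ β < α, ∀ d : M', ∃ c : M, BackForthLE β (b ⌢ d) (a ⌢ c)
termination_by α

theorem backForthLE_iff {α : Ordinal.{0}} {a : ι → M} {b : ι → M'} :
    G.BackForthLE α a b ↔ (∀ k : ℕ, (k : Ordinal) ≤ α → G.QFEq k a b) ∧
      ∀ β < α, ∀ d : M', ∃ c : M, G.BackForthLE β (b ⌢ d) (a ⌢ c) := by
  rw [BackForthLE]

namespace BackForthLE

variable {G} {α β : Ordinal.{0}} {a : ι → M} {b : ι → M'}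

theorem qfEq (h : G.BackForthLE α a b) {k : ℕ} (hk : (k : Ordinal) ≤ α) : G.QFEq k a b :=
  ((backForthLE_iff G).1 h).1 k hk

theorem exists_adjoin (h : G.BackForthLE α a b) (hβ : β < α) (d : M') :
    ∃ c : M, G.BackForthLE β (b ⌢ d) (a ⌢ c) :=
  ((backForthLE_iff G).1 h).2 β hβ d

theorem mono (hβ : β ≤ α) (h : G.BackForthLE α a b) : G.BackForthLE β a b :=
  (backForthLE_iff G).2
    ⟨fun _ hk => h.qfEq (hk.trans hβ), fun _ hγ => h.exists_adjoin (hγ.trans_le hβ)⟩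

theorem refl (α : Ordinal.{0}) (a : ι → M) : G.BackForthLE α a a := by
  induction α using WellFoundedLT.induction generalizing ι with
  | ind α ih =>
    exact (backForthLE_iff G).2 ⟨fun k _ => .refl k a, fun β hβ d => ⟨d, ih β hβ _⟩⟩

theorem trans {c : ι → M''} (h : G.BackForthLE α a b) (h' : G.BackForthLE α b c) :
    G.BackForthLE α a c := by
  induction α using WellFoundedLT.induction generalizing ι M M' M'' with
  | ind α ih =>
    refine (backForthLE_iff G).2 ⟨fun k hk => (h.qfEq hk).trans (h'.qfEq hk), fun β hβ d => ?_⟩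
    obtain ⟨c', hc'⟩ := h'.exists_adjoin hβ d
    obtain ⟨c'', hc''⟩ := h.exists_adjoin hβ c'
    exact ⟨c'', ih β hβ hc' hc''⟩

theorem reindex (h : G.BackForthLE α a b) (f : ι' → ι) : G.BackForthLE α (a ∘ f) (b ∘ f) := by
  induction α using WellFoundedLT.induction generalizing ι ι' M M' with
  | ind α ih =>
    refine (backForthLE_iff G).2 ⟨fun k hk => (h.qfEq hk).reindex f, fun β hβ d => ?_⟩
    obtain ⟨c, hc⟩ := h.exists_adjoin hβ d
    refine ⟨c, ?_⟩
    simpa only [adjoin_comp_map] using ih β hβ hc (Option.map f)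

theorem update_id [DecidableEq M] {a : ι → M} {p p' : M}
    (h : G.BackForthLE α ((fun i : {i // a i ≠ p} => a i) ⌢ p)
      ((fun i : {i // a i ≠ p} => a i) ⌢ p')) :
    G.BackForthLE α a (Function.update id p p' ∘ a) := by
  let f : ι → Option {i // a i ≠ p} := fun i => if hi : a i = p then none else some ⟨i, hi⟩
  convert h.reindex f using 1 <;> funext i <;> by_cases hi : a i = p <;> simp [f, hi]

theorem swap [Nonempty M'] (hβ : β < α) (h : G.BackForthLE α a b) : G.BackForthLE β b a := by
  obtain ⟨c, hc⟩ := h.exists_adjoin hβ (Classical.arbitrary _)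
  exact hc.reindex some

end BackForthLE

theorem backForthLE_of_equiv (f : M ≃[𝓛] M') (α : Ordinal.{0}) (a : ι → M) :
    G.BackForthLE α a (f ∘ a) := by
  induction α using WellFoundedLT.induction generalizing ι M M' with
  | ind α ih =>
    refine (backForthLE_iff G).2
      ⟨fun k _ => G.qfEq_comp f k a, fun β hβ d => ⟨f.symm d, ?_⟩⟩
    have h := ih β hβ f.symm ((f ∘ a) ⌢ d)
    rwa [comp_adjoin, show f.symm ∘ f ∘ a = a by funext i; simp] at h

theorem backForthLE_comp_equiv_iff {N N' : Type u} [𝓛.Structure N] [𝓛.Structure N']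
    (f : M ≃[𝓛] N) (f' : M' ≃[𝓛] N') {α : Ordinal.{0}} {a : ι → M} {b : ι → M'} :
    G.BackForthLE α (f ∘ a) (f' ∘ b) ↔ G.BackForthLE α a b := by
  have ha : f.symm ∘ f ∘ a = a := by funext i; simp
  have hb : f'.symm ∘ f' ∘ b = b := by funext i; simp
  refine ⟨fun h => ?_, fun h => ?_⟩
  · have h' := G.backForthLE_of_equiv f'.symm α (f' ∘ b)
    rw [hb] at h'
    exact ((G.backForthLE_of_equiv f α a).trans h).trans h'
  · have h' := G.backForthLE_of_equiv f.symm α (f ∘ a)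
    rw [ha] at h'
    exact (h'.trans h).trans (G.backForthLE_of_equiv f' α b)

/-- `M` and `M'` are back-and-forth equivalent level by level: agreement of quantifier-free
types of level `k` can be preserved when adding an arbitrary element on either side. -/
structure LevelwiseEquiv (M M' : Type u) [𝓛.Structure M] [𝓛.Structure M'] : Prop where
  qfEq_empty : ∀ k, G.QFEq k (Empty.elim : Empty → M) (Empty.elim : Empty → M')
  forth : ∀ {k} {ι : Type} [Finite ι] {a : ι → M} {b : ι → M'}, G.QFEq k a b →
    ∀ d : M, ∃ c : M', G.QFEq k (a ⌢ d) (b ⌢ c)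
  back : ∀ {k} {ι : Type} [Finite ι] {a : ι → M} {b : ι → M'}, G.QFEq k a b →
    ∀ d : M', ∃ c : M, G.QFEq k (a ⌢ c) (b ⌢ d)

namespace LevelwiseEquiv

variable {G}

theorem symm (h : G.LevelwiseEquiv M M') : G.LevelwiseEquiv M' M where
  qfEq_empty k := (h.qfEq_empty k).symm
  forth hab d := (h.back hab.symm d).imp fun _ hc => hc.symm
  back hab d := (h.forth hab.symm d).imp fun _ hc => hc.symm

theorem backForthLE_natCast (h : G.LevelwiseEquiv M M') {k : ℕ} [Finite ι] {a : ι → M} {b : ι → M'}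
    (hab : G.QFEq k a b) : G.BackForthLE (k : Ordinal) a b := by
  induction k using Nat.strong_induction_on generalizing ι M M' with
  | _ k ih =>
    refine (backForthLE_iff G).2 ⟨fun j hj => hab.mono (by exact_mod_cast hj), fun β hβ d => ?_⟩
    obtain ⟨j, rfl⟩ := Ordinal.lt_omega0.1 (hβ.trans (Ordinal.natCast_lt_omega0 k))
    have hj : j < k := by exact_mod_cast hβ
    obtain ⟨c, hc⟩ := h.back hab d
    exact ⟨c, ih j hj h.symm (hc.mono hj.le).symm⟩

end LevelwiseEquiv

/-- Back-and-forth equivalence of `a` and `b` at every countable rank. In countable structures this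
means that `a ↦ b` extends to an isomorphism. -/
def Indist (a : ι → M) (b : ι → M') : Prop := ∀ γ : Ordinal.{0}, γ < ω₁ → G.BackForthLE γ a b

theorem natCast_lt_omega_one (k : ℕ) : (k : Ordinal.{0}) < ω₁ :=
  (Ordinal.natCast_lt_omega0 k).trans Ordinal.omega0_lt_omega_one

theorem succ_lt_omega_one {γ : Ordinal.{0}} (hγ : γ < ω₁) : Order.succ γ < ω₁ :=
  (Cardinal.isSuccLimit_omega 1).succ_lt hγ

namespace Indist

variable {G} {a : ι → M} {b : ι → M'}

theorem symm [Nonempty M'] (h : G.Indist a b) : G.Indist b a :=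
  fun _ hγ => (h _ (succ_lt_omega_one hγ)).swap (Order.lt_succ _)

theorem qfEq (h : G.Indist a b) (k : ℕ) : G.QFEq k a b :=
  (h k (natCast_lt_omega_one k)).qfEq le_rfl

-- If every candidate `c` failed at some countable rank, all would fail at the supremum of
-- these ranks, which is countable because `M` is.
theorem exists_adjoin [Countable M] (h : G.Indist a b) (d : M') :
    ∃ c : M, G.Indist (b ⌢ d) (a ⌢ c) := by
  by_contra! hcon
  simp only [Indist, not_forall] at hcon
  choose f hf hf' using hcon
  have hsup : ⨆ c, f c < ω₁ := Ordinal.iSup_lt_omega_one hf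
  obtain ⟨c, hc⟩ := (h _ (succ_lt_omega_one hsup)).exists_adjoin (Order.lt_succ _) d
  exact hf' c (hc.mono (Ordinal.le_iSup f c))

end Indist

end Grading

theorem exists_monotone_seq_mem_cofinal {P : Type*} [Preorder P] (p : P)
    {𝒟 : Set (Order.Cofinal P)} (h𝒟 : 𝒟.Countable) :
    ∃ f : ℕ → P, Monotone f ∧ p ≤ f 0 ∧ ∀ D ∈ 𝒟, ∀ s₀, ∃ s, s₀ ≤ s ∧ f s ∈ D := by
  have := h𝒟.to_subtype
  have := Encodable.ofCountable 𝒟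
  -- Each `D` is repeated `ℕ` times, so that it is met beyond any given stage.
  let 𝒟' : ℕ × 𝒟 → Order.Cofinal P := fun x => x.2
  refine ⟨Order.sequenceOfCofinals p 𝒟', Order.sequenceOfCofinals.monotone p 𝒟', le_rfl,
    fun D hD s₀ => ⟨_, ?_, Order.sequenceOfCofinals.encode_mem p 𝒟' (s₀, ⟨D, hD⟩)⟩⟩
  exact (Nat.left_le_pair s₀ _).trans (Nat.le_succ _)

/-! ### Back-and-forth constructions of isomorphisms -/

namespace Grading

variable {𝓛 : FirstOrder.Language.{0, 0}} (G : Grading 𝓛)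

section BackAndForth

variable {A B : Type u}

/-- The finite partial correspondences `(a i ↦ b i)` between `A` and `B` satisfying `Φ`. -/
structure PartialCorr (Φ : ∀ {ι : Type}, (ι → A) → (ι → B) → Prop) where
  ι : Type
  finite : Finite ι
  a : ι → A
  b : ι → B
  prop : Φ a b

variable {Φ : ∀ {ι : Type}, (ι → A) → (ι → B) → Prop}

instance : Preorder (PartialCorr Φ) where
  le C C' := ∃ g : C.ι → C'.ι, C'.a ∘ g = C.a ∧ C'.b ∘ g = C.b
  le_refl _ := ⟨id, rfl, rfl⟩
  le_trans := by
    rintro C C' C'' ⟨g, ha, hb⟩ ⟨g', ha', hb'⟩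
    exact ⟨g' ∘ g, by rw [← ha, ← ha']; rfl, by rw [← hb, ← hb']; rfl⟩

theorem exists_bijective_of_directed {f : ℕ → PartialCorr Φ} (hf : Monotone f)
    (hqf : ∀ s i j, (f s).a i = (f s).a j ↔ (f s).b i = (f s).b j)
    (hA : ∀ x, ∃ s, x ∈ Set.range (f s).a) (hB : ∀ y, ∃ s, y ∈ Set.range (f s).b) :
    ∃ F : A → B, Function.Bijective F ∧ ∀ s, F ∘ (f s).a = (f s).b := by
  have key : ∀ {s t} i j, (f s).a i = (f t).a j ↔ (f s).b i = (f t).b j := by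
    intro s t i j
    obtain ⟨g, ha, hb⟩ := hf (le_max_left s t)
    obtain ⟨g', ha', hb'⟩ := hf (le_max_right s t)
    rw [← ha, ← hb, ← ha', ← hb']
    exact hqf _ _ _
  choose sA iA hiA using hA
  refine ⟨fun x => (f (sA x)).b (iA x), ⟨fun x x' h => ?_, fun y => ?_⟩,
    fun s => funext fun i => ?_⟩
  · rw [← hiA x, ← hiA x', key]
    exact h
  · obtain ⟨s, j, rfl⟩ := hB y
    exact ⟨(f s).a j, (key _ _).1 (hiA _)⟩
  · exact (key _ _).1 (hiA _)

theorem exists_equiv_of_backForth [𝓛.IsRelational] [𝓛.Structure A] [𝓛.Structure B] [Countable A]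
    [Countable B] (hqf : ∀ {ι : Type} {a : ι → A} {b : ι → B}, Φ a b → ∀ k, G.QFEq k a b)
    (forth : ∀ {ι : Type} [Finite ι] {a : ι → A} {b : ι → B}, Φ a b →
      ∀ x, ∃ y, Φ (a ⌢ x) (b ⌢ y))
    (back : ∀ {ι : Type} [Finite ι] {a : ι → A} {b : ι → B}, Φ a b →
      ∀ y, ∃ x, Φ (a ⌢ x) (b ⌢ y))
    {ι : Type} [Finite ι] {a : ι → A} {b : ι → B} (h : Φ a b) :
    ∃ e : A ≃[𝓛] B, e ∘ a = b := by
  have hle : ∀ (C : PartialCorr Φ) {x y} (hxy : Φ (C.a ⌢ x) (C.b ⌢ y)),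
      C ≤ ⟨Option C.ι, have := C.finite; inferInstance, _, _, hxy⟩ :=
    fun _ _ _ _ => ⟨some, rfl, rfl⟩
  let DA : A → Order.Cofinal (PartialCorr Φ) := fun x => ⟨{C | x ∈ Set.range C.a}, fun C => by
    have := C.finite
    obtain ⟨y, hy⟩ := forth C.prop x
    exact ⟨_, ⟨none, rfl⟩, hle C hy⟩⟩
  let DB : B → Order.Cofinal (PartialCorr Φ) := fun y => ⟨{C | y ∈ Set.range C.b}, fun C => by
    have := C.finite
    obtain ⟨x, hx⟩ := back C.prop y
    exact ⟨_, ⟨none, rfl⟩, hle C hx⟩⟩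
  obtain ⟨f, hf, ⟨g, hga, hgb⟩, hfD⟩ := exists_monotone_seq_mem_cofinal ⟨ι, ‹_›, a, b, h⟩
    ((Set.countable_range DA).union (Set.countable_range DB))
  have hA : ∀ x, ∃ s, x ∈ Set.range (f s).a := fun x =>
    (hfD (DA x) (.inl ⟨x, rfl⟩) 0).imp fun _ hs => hs.2
  obtain ⟨F, hF, hFab⟩ := exists_bijective_of_directed hf (fun s => (hqf (f s).prop 0).eq_iff)
    hA fun y => (hfD (DB y) (.inr ⟨y, rfl⟩) 0).imp fun _ hs => hs.2
  have hstage : ∀ {n} (t : Fin n → A), ∃ s, ∃ j : Fin n → (f s).ι, (f s).a ∘ j = t := by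
    intro n t
    choose s i hi using fun l => hA (t l)
    have hle : ∀ l, f (s l) ≤ f (Finset.univ.sup s) := fun l =>
      hf (Finset.le_sup (Finset.mem_univ l))
    choose g hga _ using hle
    exact ⟨_, fun l => g l (i l), funext fun l => (congrFun (hga l) (i l)).trans (hi l)⟩
  have hrel : ∀ {n} (r : 𝓛.Relations n) (t : Fin n → A), RelMap r (F ∘ t) ↔ RelMap r t := by
    intro n r t
    obtain ⟨s, j, rfl⟩ := hstage t
    rw [← Function.comp_assoc, hFab]
    exact ((hqf (f s).prop _).rel_iff r le_rfl j).symm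
  refine ⟨⟨Equiv.ofBijective F hF, fun φ => isEmptyElim φ, hrel⟩, ?_⟩
  calc F ∘ a = (F ∘ (f 0).a) ∘ g := congrArg (F ∘ ·) hga.symm
    _ = b := by rw [hFab]; exact hgb

end BackAndForth

theorem Indist.exists_equiv {M N : Type u} [𝓛.IsRelational] [𝓛.Structure M] [𝓛.Structure N]
    [Countable M] [Countable N] [Nonempty M] [Nonempty N] {ι : Type} [Finite ι] {a : ι → M}
    {b : ι → N} (h : G.Indist a b) : ∃ e : M ≃[𝓛] N, e ∘ a = b :=
  G.exists_equiv_of_backForth (fun h => h.qfEq)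
    (fun h x => h.symm.exists_adjoin x)
    (fun h y => (h.exists_adjoin y).imp fun _ hx => hx.symm) h

/-! ### Thin sets -/

variable {M N : Type u} [𝓛.Structure M] [𝓛.Structure N]

/-- A set is thin if it contains no basic set `{x | qftp(x / e) = qftp(c / e) at level k}`, where
`e` is a finite tuple and `c` is not in `e`. -/
def IsThin (s : Set M) : Prop :=
  ∀ (q : ℕ) (e : Fin q → M) (k : ℕ) (c : M), c ∉ Set.range e →
    ∃ c', G.QFEq k (e ⌢ c) (e ⌢ c') ∧ c' ∉ s

/-- The point `p`, not in `b`, is thin over `b` at rank `α` if the points which realise the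
`α`-type of `p` over `b` form a thin set. -/
structure IsThinOver (α : Ordinal.{0}) {ι : Type} (b : ι → M) (p : M) : Prop where
  notMem_range : p ∉ Set.range b
  isThin : G.IsThin {p' | G.BackForthLE α (b ⌢ p) (b ⌢ p')}

variable (M) in
/-- The points that are thin at rank `α` over some finite tuple. -/
def thinPoints (α : Ordinal.{0}) : Set M := {p | ∃ (w : ℕ) (b : Fin w → M), G.IsThinOver α b p}

variable (M) in
/-- The points whose orbit over some finite tuple not containing them is thin. -/
def thinOrbitPoints : Set M :=
  {p | ∃ (w : ℕ) (b : Fin w → M), p ∉ Set.range b ∧ G.IsThin {p' | G.Indist (b ⌢ p) (b ⌢ p')}}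

variable {G}

theorem IsThin.mono {s t : Set M} (hst : s ⊆ t) (ht : G.IsThin t) : G.IsThin s :=
  fun q e k c hc => (ht q e k c hc).imp fun _ h => ⟨h.1, fun hs => h.2 (hst hs)⟩

theorem IsThinOver.mono {α β : Ordinal.{0}} (hαβ : α ≤ β) {ι : Type} {b : ι → M} {p : M}
    (h : G.IsThinOver α b p) : G.IsThinOver β b p :=
  ⟨h.notMem_range, h.isThin.mono fun _ hp' => hp'.mono hαβ⟩

theorem IsThinOver.mem_thinPoints {α : Ordinal.{0}} {ι : Type} [Finite ι] {b : ι → M} {p : M}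
    (h : G.IsThinOver α b p) : p ∈ G.thinPoints M α := by
  obtain ⟨w, ⟨f⟩⟩ := Finite.exists_equiv_fin ι
  refine ⟨w, b ∘ f.symm, by simpa using h.notMem_range, h.isThin.mono fun p' hp' => ?_⟩
  have := hp'.reindex (Option.map f)
  rw [adjoin_comp_map, adjoin_comp_map, Function.comp_assoc, Equiv.symm_comp_self] at this
  exact this

theorem thinPoints_mono {α β : Ordinal.{0}} (h : α ≤ β) : G.thinPoints M α ⊆ G.thinPoints M β :=
  fun _ ⟨w, b, hb⟩ => ⟨w, b, hb.mono h⟩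

theorem thinPoints_subset_thinOrbitPoints {α : Ordinal.{0}} (hα : α < ω₁) :
    G.thinPoints M α ⊆ G.thinOrbitPoints M :=
  fun _ ⟨w, b, hb⟩ => ⟨w, b, hb.notMem_range, hb.isThin.mono fun _ h => h α hα⟩

theorem LevelwiseEquiv.thinPoints_natCast (hM : G.LevelwiseEquiv M M) (k : ℕ) :
    G.thinPoints M k = ∅ := by
  refine Set.eq_empty_of_forall_notMem fun p ⟨w, b, hb⟩ => ?_
  obtain ⟨p', hq, hp'⟩ := hb.isThin w b k p hb.notMem_range
  exact hp' (hM.backForthLE_natCast hq)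

theorem exists_mem_thinPoints_of_mem_thinOrbitPoints [Countable M] {p : M}
    (hp : p ∈ G.thinOrbitPoints M) : ∃ γ < ω₁, p ∈ G.thinPoints M γ := by
  obtain ⟨w, b, hpb, hthin⟩ := hp
  have hrank : ∀ x : {x : Σ q : ℕ, (Fin q → M) × ℕ × M // x.2.2.2 ∉ Set.range x.2.1},
      ∃ γ < ω₁, ∃ p', G.QFEq x.1.2.2.1 (x.1.2.1 ⌢ x.1.2.2.2) (x.1.2.1 ⌢ p') ∧
        ¬ G.BackForthLE γ (b ⌢ p) (b ⌢ p') := by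
    rintro ⟨⟨q, e, k, c⟩, hc⟩
    obtain ⟨p', hq, hp'⟩ := hthin q e k c hc
    simp only [Set.mem_ofPred_eq, Indist, not_forall] at hp'
    obtain ⟨γ, hγ, hγ'⟩ := hp'
    exact ⟨γ, hγ, p', hq, hγ'⟩
  choose γ hγ c' hq hc' using hrank
  refine ⟨_, Ordinal.iSup_lt_omega_one hγ, w, b, hpb, fun q e k c hc => ?_⟩
  exact ⟨c' ⟨⟨q, e, k, c⟩, hc⟩, hq ⟨⟨q, e, k, c⟩, hc⟩,
    fun h => hc' ⟨⟨q, e, k, c⟩, hc⟩ (h.mono (Ordinal.le_iSup γ _))⟩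

theorem IsThin.image {s : Set M} (hs : G.IsThin s) (f : M ≃[𝓛] N) : G.IsThin (f '' s) := by
  intro q e k c hc
  have he : ∀ x, e ⌢ f x = f ∘ (f.symm ∘ e) ⌢ x := fun x => by
    rw [comp_adjoin]; congr 1; funext i; simp
  obtain ⟨c', hq, hc'⟩ := hs q (f.symm ∘ e) k (f.symm c)
    (by simpa [f.symm.injective.eq_iff] using hc)
  refine ⟨f c', ?_, by simpa [f.injective.eq_iff] using hc'⟩
  have hq' := ((G.qfEq_comp f k _).symm.trans hq).trans (G.qfEq_comp f k _)
  rwa [← he, ← he, f.apply_symm_apply] at hq'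

theorem mapsTo_thinOrbitPoints (f : M ≃[𝓛] N) :
    Set.MapsTo f (G.thinOrbitPoints M) (G.thinOrbitPoints N) := by
  rintro p ⟨w, b, hpb, hb⟩
  refine ⟨w, f ∘ b, by simpa [f.injective.eq_iff] using hpb, (hb.image f).mono fun p' hp' => ?_⟩
  refine ⟨f.symm p', fun γ hγ => (G.backForthLE_comp_equiv_iff f f).1 ?_, f.apply_symm_apply p'⟩
  rw [comp_adjoin, comp_adjoin, f.apply_symm_apply]
  exact hp' γ hγ

theorem image_thinOrbitPoints (f : M ≃[𝓛] N) :
    f '' G.thinOrbitPoints M = G.thinOrbitPoints N :=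
  (mapsTo_thinOrbitPoints f).image_subset.antisymm fun p hp =>
    ⟨f.symm p, mapsTo_thinOrbitPoints f.symm hp, f.apply_symm_apply p⟩

end Grading

/-! ### Forcing conditions -/

namespace Grading

variable {𝓛 : FirstOrder.Language.{0, 0}} (G : Grading 𝓛)
variable {N K K' : Type u}

/-- A forcing condition for building a new structure on names `i : ℕ`: it promises that the names
below `r` will satisfy every `Π`-condition of rank `β` that their current values `B` satisfy in
`N`. The names below `m₀` keep the fixed values `F`. Only the values below `r` carry information.
-/
structure Cond (_G : Grading 𝓛) (F : ℕ → N) (m₀ : ℕ) (α : Ordinal.{0}) where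
  r : ℕ
  B : ℕ → N
  β : Ordinal.{0}
  m₀_le : m₀ ≤ r
  B_eq : ∀ i < m₀, B i = F i
  β_lt : β < α

namespace Cond

variable {G} {F : ℕ → N} {m₀ : ℕ} {α : Ordinal.{0}} (C : G.Cond F m₀ α)

/-- The condition `C` makes a promise of rank at least `β` about the names `j`. -/
def Covers {ι : Type} (j : ι → ℕ) (β : Ordinal.{0}) : Prop := (∀ i, j i < C.r) ∧ β ≤ C.β

variable {C}

theorem Covers.adjoin {ι : Type} {j : ι → ℕ} {β : Ordinal.{0}} (hj : C.Covers j β) {i : ℕ}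
    (hi : i < C.r) : C.Covers (j ⌢ i) β :=
  ⟨fun o => by cases o; exacts [hi, hj.1 _], hj.2⟩

theorem Covers.reindex {ι ι' : Type} {j : ι → ℕ} {β : Ordinal.{0}} (hj : C.Covers j β)
    (f : ι' → ι) : C.Covers (j ∘ f) β :=
  ⟨fun i => hj.1 (f i), hj.2⟩

theorem Covers.rank_mono {ι : Type} {j : ι → ℕ} {β γ : Ordinal.{0}} (h : γ ≤ β)
    (hj : C.Covers j β) : C.Covers j γ :=
  ⟨hj.1, h.trans hj.2⟩

theorem covers_of_lt_m₀ {ι : Type} {j : ι → ℕ} (hj : ∀ i, j i < m₀) : C.Covers j 0 :=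
  ⟨fun i => (hj i).trans_le C.m₀_le, zero_le⟩

theorem comp_eq_of_lt_m₀ {ι : Type} {j : ι → ℕ} (hj : ∀ i, j i < m₀) : C.B ∘ j = F ∘ j :=
  funext fun i => C.B_eq _ (hj i)

variable [𝓛.Structure N] [𝓛.Structure K] [𝓛.Structure K'] (C)

/-- The sequence `z` satisfies the promise of the condition `C`. -/
def Realizes (z : ℕ → K) : Prop :=
  G.BackForthLE C.β (fun i : Fin C.r => C.B i) (fun i : Fin C.r => z i)

variable {C}

theorem Realizes.backForthLE {z : ℕ → K} (hz : C.Realizes z) {ι : Type} {j : ι → ℕ}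
    {β : Ordinal.{0}} (hj : C.Covers j β) : G.BackForthLE β (C.B ∘ j) (z ∘ j) :=
  (hz.reindex fun i => (⟨j i, hj.1 i⟩ : Fin C.r)).mono hj.2

theorem Realizes.trans {z : ℕ → K} {z' : ℕ → K'} (hz : C.Realizes z)
    (hz' : G.BackForthLE C.β (fun i : Fin C.r => z i) (fun i : Fin C.r => z' i)) : C.Realizes z' :=
  BackForthLE.trans hz hz'

theorem Realizes.comp_equiv {z : ℕ → K} (hz : C.Realizes z) (f : K ≃[𝓛] K') :
    C.Realizes (f ∘ z) :=
  hz.trans (G.backForthLE_of_equiv f _ _)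

instance : Preorder (G.Cond F m₀ α) where
  le C C' := C.r ≤ C'.r ∧ C.β ≤ C'.β ∧ C.Realizes C'.B
  le_refl _ := ⟨le_rfl, le_rfl, .refl _ _⟩
  le_trans := by
    rintro C C' C'' ⟨hr, hβ, h⟩ ⟨hr', hβ', h'⟩
    exact ⟨hr.trans hr', hβ.trans hβ',
      h.trans (h'.backForthLE ⟨fun i => i.2.trans_le hr, hβ⟩)⟩

theorem Covers.mono {C' : G.Cond F m₀ α} (hC : C ≤ C') {ι : Type} {j : ι → ℕ} {β : Ordinal.{0}}
    (hj : C.Covers j β) : C'.Covers j β :=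
  ⟨fun i => (hj.1 i).trans_le hC.1, hj.2.trans hC.2.1⟩

variable (C)

theorem exists_covers {ι : Type} [Finite ι] (j : ι → ℕ) {β : Ordinal.{0}} (hβ : β < α) :
    ∃ C' : G.Cond F m₀ α, C ≤ C' ∧ C'.B = C.B ∧ C'.Covers j β := by
  obtain ⟨m, hm⟩ := (Set.finite_range j).bddAbove
  exact ⟨⟨max C.r (m + 1), C.B, max C.β β, C.m₀_le.trans (le_max_left _ _), C.B_eq,
      max_lt C.β_lt hβ⟩, ⟨le_max_left _ _, le_max_left _ _, .refl _ _⟩, rfl,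
    fun i => lt_max_of_lt_right (Nat.lt_succ_of_le (hm ⟨i, rfl⟩)), le_max_right _ _⟩

theorem exists_value_eq (d : N) :
    ∃ C' : G.Cond F m₀ α, C ≤ C' ∧ (∀ i < C.r, C'.B i = C.B i) ∧ C.r < C'.r ∧ C'.B C.r = d := by
  have h : ∀ i < C.r, Function.update C.B C.r d i = C.B i := fun i hi =>
    Function.update_of_ne hi.ne _ _
  refine ⟨⟨C.r + 1, Function.update C.B C.r d, C.β, C.m₀_le.trans (Nat.le_succ _),
    fun i hi => (h i (hi.trans_le C.m₀_le)).trans (C.B_eq i hi), C.β_lt⟩,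
    ⟨Nat.le_succ _, le_rfl, ?_⟩, h, Nat.lt_succ_self _, Function.update_self _ _ _⟩
  simp only [Realizes, funext fun i : Fin C.r => h i i.2]
  exact .refl _ _

/-- `BackForthLE γ u (C.B ∘ j)`, as far as it can be tested at ranks at most `C.β` and with
elements that have a name below `C.r`. -/
def Approx (γ : Ordinal.{0}) {ι : Type} (u : ι → N) (j : ι → ℕ) : Prop :=
  (∀ k : ℕ, (k : Ordinal) ≤ γ → (k : Ordinal) ≤ C.β → G.QFEq k u (C.B ∘ j)) ∧
    ∀ δ < γ, δ ≤ C.β → ∀ x < C.r, ∃ c, G.BackForthLE δ (C.B ∘ j ⌢ x) (u ⌢ c)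

variable {C}

theorem exists_not_approx (hα : ω ≤ α) {γ : Ordinal.{0}} (hγ : γ ≤ α) {ι : Type} {u : ι → N}
    {j : ι → ℕ} (hj : C.Covers j 0) (h : ¬ G.BackForthLE γ u (C.B ∘ j)) :
    ∃ C' : G.Cond F m₀ α, C ≤ C' ∧ (∀ i < C.r, C'.B i = C.B i) ∧ ¬ C'.Approx γ u j := by
  rw [backForthLE_iff, not_and_or] at h
  push Not at h
  rcases h with ⟨k, hk, hqf⟩ | ⟨δ, hδ, d, hd⟩
  · obtain ⟨C', hC', hB, hcov⟩ :=
      C.exists_covers Empty.elim ((Ordinal.natCast_lt_omega0 k).trans_le hα)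
    exact ⟨C', hC', fun i _ => congrFun hB i, fun hap => hqf (hB ▸ hap.1 k hk hcov.2)⟩
  · obtain ⟨C', hC', hB, hcov⟩ := C.exists_covers Empty.elim (hδ.trans_le hγ)
    obtain ⟨C'', hC'', hB', hr, hd'⟩ := C'.exists_value_eq d
    have hval : ∀ i < C.r, C''.B i = C.B i := fun i hi => by rw [hB' i (hi.trans_le hC'.1), hB]
    refine ⟨C'', hC'.trans hC'', hval, fun hap => ?_⟩
    obtain ⟨c, hc⟩ := hap.2 δ hδ (hcov.2.trans hC''.2.1) _ hr
    rw [comp_adjoin, hd', show C''.B ∘ j = C.B ∘ j from funext fun i => hval _ (hj.1 i)] at hc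
    exact hd c hc

/-! ### Dense requirements -/

variable (C)

/-- The condition `C` settles whether the names `j` satisfy the `Π`-conditions of rank `δ` true
of `u`. -/
def Decides {ι : Type} (j : ι → ℕ) (u : ι → N) (δ : Ordinal.{0}) : Prop :=
  C.Covers j δ ∧ (G.BackForthLE δ u (C.B ∘ j) ∨ ¬ C.Approx δ u j)

/-- If `C` makes `v ⌢ x` matter for the names `j`, then some name plays the role of `x`. -/
def Witnesses {ι : Type} (j : ι → ℕ) (v : ι → N) (x : N) (δ γ : Ordinal.{0}) : Prop :=
  C.Covers j δ ∧ (G.BackForthLE γ (C.B ∘ j) v →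
    ∃ y < C.r, G.BackForthLE δ (v ⌢ x) (C.B ∘ j ⌢ y))

/-- Whenever the values of a condition `C'` of rank at least `C.β`, read along a renaming `g` which
fixes the names below `m₀`, satisfy the promise of `C`, the promise of `C'` can be realised in `K`
with `kk` as the values of the names `g ∘ ii`. -/
def Forces {ι : Type} (ii : ι → ℕ) (kk : ι → K) : Prop :=
  ∀ (C' : G.Cond F m₀ α) (g : ℕ → ℕ), C.β ≤ C'.β → (∀ i < m₀, g i = i) →
    (∀ i < C.r, g i < C'.r) → C.Realizes (C'.B ∘ g) →
      ∃ z : ℕ → K, z ∘ g ∘ ii = kk ∧ C'.Realizes z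

/-- Either `C` forces that the names `ii` can always be realised by `kk`, or no realization of `C`
gives them these values. -/
def DecidesForcing {ι : Type} (ii : ι → ℕ) (kk : ι → K) : Prop :=
  C.Covers ii 0 ∧ (C.Forces ii kk ∨ ∀ z : ℕ → K, z ∘ ii = kk → ¬ C.Realizes z)

/-- The condition `C` provides a witness against the basic set of the values of `e`, `k`, `c`
in the definition of thinness of the points of the same `α`-type as `p` over `b`. -/
def KeepsThin {ι κ : Type} (b : ι → N) (p : N) (b' : ι → ℕ) (e : κ → ℕ) (k c : ℕ) : Prop :=
  C.Covers (e ⌢ c) k ∧ (C.B c ∈ Set.range (C.B ∘ e) ∨ ∃ c' < C.r,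
    G.QFEq k (C.B ∘ e ⌢ c) (C.B ∘ e ⌢ c') ∧ ¬ C.Approx α (b ⌢ p) (b' ⌢ c'))

theorem exists_decides (hα : ω ≤ α) {ι : Type} [Finite ι] (j : ι → ℕ) (u : ι → N)
    {δ : Ordinal.{0}} (hδ : δ < α) : ∃ C' : G.Cond F m₀ α, C'.Decides j u δ ∧ C ≤ C' := by
  obtain ⟨C', hC', -, hj⟩ := C.exists_covers j hδ
  by_cases h : G.BackForthLE δ u (C'.B ∘ j)
  · exact ⟨C', ⟨hj, .inl h⟩, hC'⟩
  · obtain ⟨C'', hC'', -, hap⟩ := exists_not_approx hα hδ.le (hj.rank_mono zero_le) h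
    exact ⟨C'', ⟨hj.mono hC'', .inr hap⟩, hC'.trans hC''⟩

theorem exists_witnesses {ι : Type} [Finite ι] (j : ι → ℕ) (v : ι → N) (x : N)
    {δ γ : Ordinal.{0}} (hδ : δ < γ) (hγ : γ < α) :
    ∃ C' : G.Cond F m₀ α, C'.Witnesses j v x δ γ ∧ C ≤ C' := by
  obtain ⟨C', hC', -, hj⟩ := C.exists_covers j (hδ.trans hγ)
  by_cases h : G.BackForthLE γ (C'.B ∘ j) v
  · obtain ⟨c, hc⟩ := h.exists_adjoin hδ x
    obtain ⟨C'', hC'', hB, hr, hc'⟩ := C'.exists_value_eq c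
    refine ⟨C'', ⟨hj.mono hC'', fun _ => ⟨_, hr, ?_⟩⟩, hC'.trans hC''⟩
    rwa [comp_adjoin, hc', show C''.B ∘ j = C'.B ∘ j from funext fun i => hB _ (hj.1 i)]
  · exact ⟨C', ⟨hj, fun h' => absurd h' h⟩, hC'⟩

-- If `C` does not force `kk`, glue a counterexample `C'` to `C` with the names of `C'` shifted by
-- `C.r`. In a realization of the result the name `i` of `C` and the name `g i` of `C'` agree.
theorem exists_not_realizes_of_not_forces {ι : Type} {ii : ι → ℕ} (hii : C.Covers ii 0)
    {kk : ι → K} (h : ¬ C.Forces ii kk) : ∃ C' : G.Cond F m₀ α, C ≤ C' ∧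
      ∀ z : ℕ → K, z ∘ ii = kk → ¬ C'.Realizes z := by
  unfold Forces at h
  push Not at h
  obtain ⟨C', g, hβ, hg₀, hg, hreal, hno⟩ := h
  let B : ℕ → N := fun i => if i < C.r then C'.B (g i) else C'.B (i - C.r)
  have hBlt : ∀ i < C.r, B i = C'.B (g i) := fun i hi => if_pos hi
  have hBadd : ∀ i, B (C.r + i) = C'.B i := fun i => by simp [B]
  let D : G.Cond F m₀ α := ⟨C.r + C'.r, B, C'.β, C.m₀_le.trans (Nat.le_add_right _ _),
    fun i hi => by rw [hBlt i (hi.trans_le C.m₀_le), hg₀ i hi, C'.B_eq i hi], C'.β_lt⟩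
  refine ⟨D, ⟨Nat.le_add_right _ _, hβ, ?_⟩, fun z hz hzD => ?_⟩
  · simpa only [Realizes, show (fun i : Fin C.r => D.B i) = fun i : Fin C.r => (C'.B ∘ g) i from
      funext fun i => hBlt i i.2] using hreal
  have hcopy : ∀ i < C.r, z (C.r + g i) = z i := fun i hi => by
    have hcov : D.Covers ![C.r + g i, i] 0 :=
      ⟨Fin.forall_fin_two.2 ⟨Nat.add_lt_add_left (hg i hi) _, hi.trans_le (Nat.le_add_right _ _)⟩,
        zero_le⟩
    exact (((hzD.backForthLE hcov).qfEq (k := 0) (by simp)).eq_iff 0 1).1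
      ((hBadd _).trans (hBlt i hi).symm)
  refine hno (fun i => z (C.r + i)) ?_ ?_
  · rw [← hz]
    exact funext fun x => hcopy _ (hii.1 x)
  · have := hzD.backForthLE (j := fun i : Fin C'.r => C.r + i) (β := C'.β)
      ⟨fun i => Nat.add_lt_add_left i.2 _, le_rfl⟩
    rwa [show D.B ∘ (fun i : Fin C'.r => C.r + i) = fun i : Fin C'.r => C'.B i from
      funext fun i => hBadd i] at this

theorem exists_decidesForcing {ι : Type} [Finite ι] (ii : ι → ℕ) (kk : ι → K) :
    ∃ C' : G.Cond F m₀ α, C'.DecidesForcing ii kk ∧ C ≤ C' := by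
  obtain ⟨C', hC', -, hii⟩ := C.exists_covers ii (zero_le.trans_lt C.β_lt)
  by_cases h : C'.Forces ii kk
  · exact ⟨C', ⟨hii, .inl h⟩, hC'⟩
  · obtain ⟨C'', hC'', hno⟩ := C'.exists_not_realizes_of_not_forces hii h
    exact ⟨C'', ⟨hii.mono hC'', .inr hno⟩, hC'.trans hC''⟩

theorem exists_keepsThin (hα : ω ≤ α) {ι : Type} {b' : ι → ℕ} (hb' : ∀ i, b' i < m₀) {p : N}
    (hthin : G.IsThinOver α (F ∘ b') p) {q : ℕ} (e : Fin q → ℕ) (k c : ℕ) :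
    ∃ C' : G.Cond F m₀ α, C'.KeepsThin (F ∘ b') p b' e k c ∧ C ≤ C' := by
  obtain ⟨C₁, h₁, -, hcov⟩ :=
    C.exists_covers (e ⌢ c) ((Ordinal.natCast_lt_omega0 k).trans_le hα)
  by_cases hc : C₁.B c ∈ Set.range (C₁.B ∘ e)
  · exact ⟨C₁, ⟨hcov, .inl hc⟩, h₁⟩
  obtain ⟨p', hq, hp'⟩ := hthin.isThin q (C₁.B ∘ e) k (C₁.B c) hc
  obtain ⟨C₂, h₂, hB, hr, hval⟩ := C₁.exists_value_eq p'
  have hb'r : C₂.Covers (b' ⌢ C₁.r) 0 := (covers_of_lt_m₀ hb').adjoin hr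
  obtain ⟨C₃, h₃, hB', hap⟩ := exists_not_approx (γ := α) (u := (F ∘ b') ⌢ p) hα le_rfl hb'r
    (by rwa [comp_adjoin, comp_eq_of_lt_m₀ hb', hval])
  have hold : C₃.B ∘ e ⌢ c = C₁.B ∘ e ⌢ c := funext fun o => by
    have ho := hcov.1 o
    exact (hB' _ (ho.trans_le h₂.1)).trans (hB _ ho)
  refine ⟨C₃, ⟨hcov.mono (h₂.trans h₃), .inr ⟨C₁.r, hr.trans_le h₃.1, ?_, hap⟩⟩,
    h₁.trans (h₂.trans h₃)⟩
  have hold' : C₃.B ∘ e = C₁.B ∘ e := congrArg (· ∘ some) hold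
  rwa [hold, comp_adjoin, comp_adjoin, hold', hB' _ hr, hval]

end Cond

end Grading

namespace Grading

variable {𝓛 : FirstOrder.Language.{0, 0}} {G : Grading 𝓛} {N : Type u} [𝓛.Structure N]
variable {F : ℕ → N} {m₀ : ℕ} {α : Ordinal.{0}} {J : Type}

/-- An increasing sequence of conditions is generic (relative to the structures `rep j`) if it
meets all the dense requirements beyond every stage. -/
structure IsGeneric (C : ℕ → G.Cond F m₀ α) (rep : J → Type u) [∀ j, 𝓛.Structure (rep j)] :
    Prop where
  mono : Monotone C
  decides : ∀ {q : ℕ} (j : Fin q → ℕ) (u : Fin q → N) {δ : Ordinal.{0}}, δ < α →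
    ∀ s₀, ∃ s, s₀ ≤ s ∧ (C s).Decides j u δ
  witnesses : ∀ {q : ℕ} (j : Fin q → ℕ) (v : Fin q → N) (x : N) {δ γ : Ordinal.{0}}, δ < γ →
    γ < α → ∀ s₀, ∃ s, s₀ ≤ s ∧ (C s).Witnesses j v x δ γ
  decidesForcing : ∀ {q : ℕ} (ii : Fin q → ℕ) {i : J} (kk : Fin q → rep i),
    ∀ s₀, ∃ s, s₀ ≤ s ∧ (C s).DecidesForcing ii kk
  keepsThin : ∀ {w : ℕ} {b : Fin w → ℕ} {p : ℕ}, (∀ i, b i < m₀) →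
    G.IsThinOver α (F ∘ b) (F p) → ∀ {q : ℕ} (e : Fin q → ℕ) (k c : ℕ),
      ∃ s, (C s).KeepsThin (F ∘ b) (F p) b e k c

theorem countable_Iio_of_lt_omega_one (hα : α < ω₁) : Countable (Set.Iio α) := by
  rw [← Cardinal.mk_le_aleph0_iff, Cardinal.mk_Iio_ordinal, Cardinal.lift_le_aleph0,
    ← Cardinal.lt_aleph_one_iff]
  exact Cardinal.lt_omega_iff_card_lt.1 hα

theorem exists_isGeneric [Countable N] [Countable J] (F : ℕ → N) (m₀ : ℕ) (hα : ω ≤ α)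
    (hα' : α < ω₁) (rep : J → Type u) [∀ j, 𝓛.Structure (rep j)] [∀ j, Countable (rep j)] :
    ∃ C : ℕ → G.Cond F m₀ α, IsGeneric C rep := by
  have := countable_Iio_of_lt_omega_one hα'
  let D₁ : (Σ q : ℕ, (Fin q → ℕ) × (Fin q → N) × Set.Iio α) → Order.Cofinal (G.Cond F m₀ α) :=
    fun x => ⟨{C | C.Decides x.2.1 x.2.2.1 x.2.2.2}, fun C =>
      C.exists_decides hα x.2.1 x.2.2.1 x.2.2.2.2⟩
  let D₂ : (Σ q : ℕ, (Fin q → ℕ) × (Fin q → N) × N × {x : Set.Iio α × Set.Iio α // x.1 < x.2}) →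
      Order.Cofinal (G.Cond F m₀ α) :=
    fun ⟨_, j, v, x, ⟨⟨δ, γ⟩, h⟩⟩ => ⟨{C | C.Witnesses j v x δ γ}, fun C =>
      C.exists_witnesses j v x h γ.2⟩
  let D₃ : (Σ q : ℕ, (Fin q → ℕ) × Σ i : J, Fin q → rep i) → Order.Cofinal (G.Cond F m₀ α) :=
    fun x => ⟨{C | C.DecidesForcing x.2.1 x.2.2.2}, fun C =>
      C.exists_decidesForcing x.2.1 x.2.2.2⟩
  let D₄ : {x : Σ w : ℕ, (Fin w → ℕ) × ℕ //
      (∀ i, x.2.1 i < m₀) ∧ G.IsThinOver α (F ∘ x.2.1) (F x.2.2)} ×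
      (Σ q : ℕ, (Fin q → ℕ) × ℕ × ℕ) → Order.Cofinal (G.Cond F m₀ α) :=
    fun x => ⟨{C | C.KeepsThin (F ∘ x.1.1.2.1) (F x.1.1.2.2) x.1.1.2.1 x.2.2.1 x.2.2.2.1 x.2.2.2.2},
      fun C => C.exists_keepsThin hα x.1.2.1 x.1.2.2 _ _ _⟩
  obtain ⟨C, hC, -, hD⟩ := exists_monotone_seq_mem_cofinal
    (⟨m₀, F, 0, le_rfl, fun _ _ => rfl, Ordinal.omega0_pos.trans_le hα⟩ : G.Cond F m₀ α)
    ((((Set.countable_range D₁).union (Set.countable_range D₂)).union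
      (Set.countable_range D₃)).union (Set.countable_range D₄))
  exact ⟨C, hC,
    fun j u δ hδ => hD _ (.inl (.inl (.inl ⟨⟨_, j, u, ⟨δ, hδ⟩⟩, rfl⟩))),
    fun j v x δ γ hδ hγ => hD _
      (.inl (.inl (.inr ⟨⟨_, j, v, x, ⟨(⟨δ, hδ.trans hγ⟩, ⟨γ, hγ⟩), hδ⟩⟩, rfl⟩))),
    fun ii i kk => hD _ (.inl (.inr ⟨⟨_, ii, i, kk⟩, rfl⟩)),
    fun hb h _ e k c => (hD _ (.inr ⟨(⟨⟨_, _, _⟩, hb, h⟩, ⟨_, e, k, c⟩), rfl⟩) 0).imp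
      fun _ => And.right⟩

namespace IsGeneric

variable {rep : J → Type u} [∀ j, 𝓛.Structure (rep j)] {C : ℕ → G.Cond F m₀ α} {ι : Type} {s : ℕ}
  {j : ι → ℕ}

theorem backForthLE_stage (hC : IsGeneric C rep) {t : ℕ} (hst : s ≤ t) {γ : Ordinal.{0}}
    (hj : (C s).Covers j γ) : G.BackForthLE γ ((C s).B ∘ j) ((C t).B ∘ j) :=
  (hC.mono hst).2.2.backForthLE hj

theorem exists_covers (hC : IsGeneric C rep) [Finite ι] (j : ι → ℕ) {β : Ordinal.{0}}
    (hβ : β < α) (s₀ : ℕ) : ∃ s, s₀ ≤ s ∧ (C s).Covers j β := by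
  obtain ⟨q, ⟨e⟩⟩ := Finite.exists_equiv_fin ι
  obtain ⟨s, hs, hcov, -⟩ := hC.decides (j ∘ e.symm) (F ∘ j ∘ e.symm) hβ s₀
  exact ⟨s, hs, fun i => by simpa using hcov.1 (e i), hcov.2⟩

theorem exists_witness (hC : IsGeneric C rep) [Finite ι] {v : ι → N} {δ γ : Ordinal.{0}}
    (hδ : δ < γ) (hγ : γ < α) (h : ∀ t, s ≤ t → G.BackForthLE γ ((C t).B ∘ j) v) (x : N) :
    ∃ t y, (C t).Covers (j ⌢ y) δ ∧ G.BackForthLE δ (v ⌢ x) ((C t).B ∘ j ⌢ y) := by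
  obtain ⟨q, ⟨e⟩⟩ := Finite.exists_equiv_fin ι
  obtain ⟨t, ht, hcov, hw⟩ := hC.witnesses (j ∘ e.symm) (v ∘ e.symm) x hδ hγ s
  obtain ⟨y, hy, hvy⟩ := hw ((h t ht).reindex e.symm)
  have hcov' : (C t).Covers j δ := by
    simpa only [Function.comp_assoc, Equiv.symm_comp_self, Function.comp_id] using hcov.reindex e
  refine ⟨t, y, hcov'.adjoin hy, ?_⟩
  simpa only [Function.comp_assoc, adjoin_comp_map, Equiv.symm_comp_self, Function.comp_id]
    using hvy.reindex (Option.map e)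

end IsGeneric

/-! ### The structure built by a generic sequence -/

/-- The element of the ultrapower of `N` represented by the successive values of the name `i`. -/
noncomputable def limitPoint (C : ℕ → G.Cond F m₀ α) (i : ℕ) :
    (Filter.hyperfilter ℕ : Filter ℕ).Product fun _ => N :=
  Quotient.mk _ fun s => (C s).B i

/-- The structure whose elements are the names, taken along the sequence `C`. It is realised
inside an ultrapower of `N`. -/
noncomputable def limit [𝓛.IsRelational] (C : ℕ → G.Cond F m₀ α) :
    𝓛.Substructure ((Filter.hyperfilter ℕ : Filter ℕ).Product fun _ => N) where
  carrier := Set.range (limitPoint C)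
  fun_mem f := isEmptyElim f

variable [𝓛.IsRelational]

/-- The element of the limit structure named `i`. -/
noncomputable def nameVal (C : ℕ → G.Cond F m₀ α) (i : ℕ) : limit C := ⟨limitPoint C i, i, rfl⟩

variable {C : ℕ → G.Cond F m₀ α}

theorem nameVal_surjective : Function.Surjective (nameVal C) := by
  rintro ⟨_, i, rfl⟩
  exact ⟨i, rfl⟩

instance : Countable (limit C) := nameVal_surjective.countable

theorem exists_nameVal_comp {ι : Type} (a : ι → limit C) : ∃ j, nameVal C ∘ j = a :=
  nameVal_surjective.comp_left a

theorem nameVal_eq_iff {i j : ℕ} :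
    nameVal C i = nameVal C j ↔ ∀ᶠ s in Filter.hyperfilter ℕ, (C s).B i = (C s).B j := by
  rw [Subtype.ext_iff]
  exact Quotient.eq

theorem relMap_nameVal {n : ℕ} (r : 𝓛.Relations n) (t : Fin n → ℕ) :
    RelMap r (nameVal C ∘ t) ↔ ∀ᶠ s in Filter.hyperfilter ℕ, RelMap r ((C s).B ∘ t) :=
  relMap_quotient_mk' _ r fun i s => (C s).B (t i)

namespace IsGeneric

variable {rep : J → Type u} [∀ j, 𝓛.Structure (rep j)] {ι : Type} {s : ℕ} {j : ι → ℕ}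

theorem qfEq_nameVal (hC : IsGeneric C rep) {k : ℕ} (hj : (C s).Covers j k) :
    G.QFEq k ((C s).B ∘ j) (nameVal C ∘ j) := by
  have hstage : ∀ᶠ t in Filter.hyperfilter ℕ, G.QFEq k ((C s).B ∘ j) ((C t).B ∘ j) :=
    ((Filter.eventually_ge_atTop s).filter_mono Nat.hyperfilter_le_atTop).mono
      fun t ht => (hC.backForthLE_stage ht hj).qfEq le_rfl
  refine ⟨fun i i' => ?_, fun r hr t => ?_⟩
  · rw [Function.comp_apply (f := nameVal C), Function.comp_apply (f := nameVal C), nameVal_eq_iff]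
    exact Filter.eventually_const.symm.trans
      (Filter.eventually_congr (hstage.mono fun _ h => h.eq_iff i i'))
  · rw [Function.comp_assoc (nameVal C), relMap_nameVal]
    exact Filter.eventually_const.symm.trans
      (Filter.eventually_congr (hstage.mono fun _ h => h.rel_iff r hr t))

theorem backForthLE_nameVal_and (hC : IsGeneric C rep) [Finite ι] {γ : Ordinal.{0}}
    (hj : (C s).Covers j γ) : G.BackForthLE γ ((C s).B ∘ j) (nameVal C ∘ j) ∧
      (γ < (C s).β → G.BackForthLE γ (nameVal C ∘ j) ((C s).B ∘ j)) := by
  have : Nonempty N := ⟨F 0⟩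
  induction γ using WellFoundedLT.induction generalizing s ι with
  | ind γ ih =>
    refine ⟨(backForthLE_iff G).2 ⟨fun k hk => hC.qfEq_nameVal (hj.rank_mono hk), fun δ hδ d => ?_⟩,
      fun hγ => (backForthLE_iff G).2
        ⟨fun k hk => (hC.qfEq_nameVal (hj.rank_mono hk)).symm, fun δ hδ d => ?_⟩⟩
    · obtain ⟨i, rfl⟩ := nameVal_surjective d
      obtain ⟨t, hst, hcov⟩ := hC.exists_covers (j ⌢ i) (hδ.trans_le (hj.2.trans (C s).β_lt.le)) s
      have hδt : δ < (C t).β := hδ.trans_le (hj.2.trans (hC.mono hst).2.1)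
      obtain ⟨c, hc⟩ := (hC.backForthLE_stage hst hj).exists_adjoin hδ ((C t).B i)
      have hi := (ih δ hδ hcov).2 hδt
      rw [comp_adjoin, comp_adjoin] at hi
      exact ⟨c, hi.trans hc⟩
    · obtain ⟨t, y, hcov, hty⟩ := hC.exists_witness hδ (hγ.trans (C s).β_lt)
        (fun t ht => (hC.backForthLE_stage ht ⟨hj.1, le_rfl⟩).swap hγ) d
      exact ⟨nameVal C y, comp_adjoin j y (nameVal C) ▸ hty.trans (ih δ hδ hcov).1⟩

theorem backForthLE_nameVal (hC : IsGeneric C rep) [Finite ι] {γ : Ordinal.{0}}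
    (hj : (C s).Covers j γ) : G.BackForthLE γ ((C s).B ∘ j) (nameVal C ∘ j) :=
  (hC.backForthLE_nameVal_and hj).1

theorem nameVal_backForthLE (hC : IsGeneric C rep) [Finite ι] {γ : Ordinal.{0}}
    (hj : (C s).Covers j γ) (hγ : γ < (C s).β) :
    G.BackForthLE γ (nameVal C ∘ j) ((C s).B ∘ j) :=
  (hC.backForthLE_nameVal_and hj).2 hγ

theorem realizes_nameVal (hC : IsGeneric C rep) (s : ℕ) : (C s).Realizes (nameVal C) :=
  hC.backForthLE_nameVal (j := fun i : Fin (C s).r => (i : ℕ)) ⟨fun i => i.2, le_rfl⟩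

theorem levelwiseEquiv_limit (hC : IsGeneric C rep) (hα : ω ≤ α) (hN : G.LevelwiseEquiv N N) :
    G.LevelwiseEquiv (limit C) N := by
  have hnat : ∀ k : ℕ, (k : Ordinal) < α := fun k => (Ordinal.natCast_lt_omega0 k).trans_le hα
  refine ⟨fun k => ⟨fun i => i.elim, fun {n} r hr t => ?_⟩, ?_, ?_⟩
  · obtain ⟨s, -, hcov⟩ := hC.exists_covers Empty.elim (hnat k) 0
    have := (hC.qfEq_nameVal hcov).symm.rel_iff r hr t
    rwa [Subsingleton.elim (nameVal C ∘ Empty.elim) Empty.elim,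
      Subsingleton.elim ((C s).B ∘ Empty.elim) Empty.elim] at this
  · intro k ι _ a b hab d
    obtain ⟨j, rfl⟩ := exists_nameVal_comp a
    obtain ⟨i, rfl⟩ := nameVal_surjective d
    obtain ⟨s, -, hcov⟩ := hC.exists_covers (j ⌢ i) (hnat k) 0
    have hji := hC.qfEq_nameVal hcov
    rw [comp_adjoin, comp_adjoin] at hji
    obtain ⟨c, hc⟩ := hN.forth ((hji.reindex some).trans hab) ((C s).B i)
    exact ⟨c, hji.symm.trans hc⟩
  · intro k ι _ a b hab d
    obtain ⟨j, rfl⟩ := exists_nameVal_comp a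
    obtain ⟨s, -, hcov⟩ := hC.exists_covers j (hnat (k + 2)) 0
    have hlt : ((k + 1 : ℕ) : Ordinal) < ((k + 2 : ℕ) : Ordinal) := by
      exact_mod_cast Nat.lt_succ_self (k + 1)
    obtain ⟨c, hc⟩ := hN.back (((hC.qfEq_nameVal hcov).mono (Nat.le_add_right k 2)).trans hab) d
    obtain ⟨c', hc'⟩ := (hC.nameVal_backForthLE (hcov.rank_mono hlt.le)
      (hlt.trans_le hcov.2)).exists_adjoin (β := k) (by exact_mod_cast Nat.lt_succ_self k) c
    exact ⟨c', (hc'.qfEq le_rfl).symm.trans hc⟩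

theorem approx_of_backForthLE (hC : IsGeneric C rep) [Finite ι] {γ : Ordinal.{0}} {u : ι → N}
    (hj : (C s).Covers j 0) (h : G.BackForthLE γ u (nameVal C ∘ j)) : (C s).Approx γ u j := by
  refine ⟨fun k hk hks => (h.qfEq hk).trans (hC.qfEq_nameVal ⟨hj.1, hks⟩).symm,
    fun δ hδ hδs x hx => ?_⟩
  obtain ⟨c, hc⟩ := h.exists_adjoin hδ (nameVal C x)
  have hjx := hC.backForthLE_nameVal (j := j ⌢ x)
    (Cond.Covers.adjoin ⟨hj.1, hδs⟩ hx)
  exact ⟨c, hjx.trans (comp_adjoin j x (nameVal C) ▸ hc)⟩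

theorem exists_stage_backForthLE (hC : IsGeneric C rep) [Finite ι] {δ : Ordinal.{0}} (hδ : δ < α)
    {u : ι → N} (h : G.BackForthLE δ u (nameVal C ∘ j)) :
    ∃ t₀, ∀ t, t₀ ≤ t → (C t).Covers j δ ∧ G.BackForthLE δ u ((C t).B ∘ j) := by
  obtain ⟨q, ⟨e⟩⟩ := Finite.exists_equiv_fin ι
  obtain ⟨t₀, -, hcov, hdec⟩ := hC.decides (j ∘ e.symm) (u ∘ e.symm) hδ 0
  have hcov' : (C t₀).Covers j δ := by
    simpa only [Function.comp_assoc, Equiv.symm_comp_self, Function.comp_id] using hcov.reindex e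
  have hle : G.BackForthLE δ u ((C t₀).B ∘ j) := by
    simpa only [Function.comp_assoc, Equiv.symm_comp_self, Function.comp_id] using
      (hdec.resolve_right fun hap => hap (hC.approx_of_backForthLE
        (hcov.rank_mono zero_le) (h.reindex e.symm))).reindex e
  exact ⟨t₀, fun t ht => ⟨hcov'.mono (hC.mono ht),
    hle.trans (hC.backForthLE_stage ht hcov')⟩⟩

theorem approx_of_backForthLE_nameVal (hC : IsGeneric C rep) [Finite ι] {a : ι → ℕ}
    (ha : ∀ i, a i < m₀) (hj : (C s).Covers j 0)
    (h : G.BackForthLE α (nameVal C ∘ a) (nameVal C ∘ j)) : (C s).Approx α (F ∘ a) j := by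
  have hF : ∀ t, (C t).B ∘ a = F ∘ a := fun t => Cond.comp_eq_of_lt_m₀ ha
  refine ⟨fun k hk hks => ?_, fun δ hδ hδs x hx => ?_⟩
  · have hak := hC.qfEq_nameVal (k := k) ⟨(Cond.covers_of_lt_m₀ (C := C s) ha).1, hks⟩
    rw [hF] at hak
    exact (hak.trans (h.qfEq hk)).trans (hC.qfEq_nameVal ⟨hj.1, hks⟩).symm
  · obtain ⟨c, hc⟩ := h.exists_adjoin hδ (nameVal C x)
    obtain ⟨i, rfl⟩ := nameVal_surjective c
    have hjx := hC.backForthLE_nameVal (j := j ⌢ x) (Cond.Covers.adjoin ⟨hj.1, hδs⟩ hx)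
    rw [← comp_adjoin, ← comp_adjoin] at hc
    obtain ⟨t, ht⟩ := hC.exists_stage_backForthLE hδ (hjx.trans hc)
    have := (ht t le_rfl).2
    rw [comp_adjoin a, hF] at this
    exact ⟨_, this⟩

theorem isThinOver_nameVal (hC : IsGeneric C rep) {w : ℕ} {b : Fin w → ℕ} {p : ℕ}
    (hb : ∀ i, b i < m₀) (hp : p < m₀) (h : G.IsThinOver α (F ∘ b) (F p)) :
    G.IsThinOver α (nameVal C ∘ b) (nameVal C p) := by
  have hbp : ∀ o, (b ⌢ p) o < m₀ := fun o => by cases o; exacts [hp, hb _]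
  refine ⟨fun ⟨i, hi⟩ => h.notMem_range ⟨i, ?_⟩, fun q e' k c' hc' => ?_⟩
  · have hq := hC.qfEq_nameVal (s := 0) (k := 0) (by simpa using Cond.covers_of_lt_m₀ hbp)
    rw [Cond.comp_eq_of_lt_m₀ hbp] at hq
    exact (hq.eq_iff (some i) none).2 hi
  obtain ⟨e, rfl⟩ := exists_nameVal_comp e'
  obtain ⟨c, rfl⟩ := nameVal_surjective c'
  obtain ⟨s, hcov, hs⟩ := hC.keepsThin hb h e k c
  have hec := hC.qfEq_nameVal hcov
  rcases hs with ⟨i, hi⟩ | ⟨x, hx, hcx, hap⟩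
  · exact absurd ⟨i, (hec.eq_iff (some i) none).1 hi⟩ hc'
  have hex := hC.qfEq_nameVal (j := e ⌢ x) ((hcov.reindex some).adjoin hx)
  rw [← comp_adjoin]
  refine ⟨nameVal C x, comp_adjoin e x (nameVal C) ▸ (hec.symm.trans hcx).trans hex, ?_⟩
  rw [Set.mem_ofPred_eq, ← comp_adjoin, ← comp_adjoin]
  refine fun hle => hap ?_
  rw [← comp_adjoin]
  exact hC.approx_of_backForthLE_nameVal hbp ((Cond.covers_of_lt_m₀ hb).adjoin hx) hle

theorem exists_names_of_forces (hC : IsGeneric C rep) {K : Type u} [𝓛.Structure K] {ii : ι → ℕ}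
    {kk : ι → K} (h : (C s).Forces ii kk) {z : ℕ → limit C} (hz : ∀ i < m₀, z i = nameVal C i)
    (hreal : (C s).Realizes z) : ∃ g : ℕ → ℕ, nameVal C ∘ g = z ∧ (∀ i < m₀, g i = i) ∧
      ∃ t₀, ∀ t, t₀ ≤ t → ∃ z' : ℕ → K, z' ∘ g ∘ ii = kk ∧ (C t).Realizes z' := by
  obtain ⟨g', hg'⟩ := exists_nameVal_comp z
  let g : ℕ → ℕ := fun i => if i < m₀ then i else g' i
  have hg₀ : ∀ i < m₀, g i = i := fun i hi => if_pos hi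
  have hg : nameVal C ∘ g = z := funext fun i => by
    by_cases hi : i < m₀
    · rw [Function.comp_apply, hg₀ i hi, hz i hi]
    · rw [Function.comp_apply, show g i = g' i from if_neg hi, ← hg', Function.comp_apply]
  rw [← hg] at hreal
  obtain ⟨t₀, ht₀⟩ := hC.exists_stage_backForthLE (j := fun i : Fin (C s).r => g i) (C s).β_lt hreal
  refine ⟨g, hg, hg₀, max s t₀, fun t ht => ?_⟩
  obtain ⟨hcov, hle⟩ := ht₀ t ((le_max_right _ _).trans ht)
  exact h (C t) g (hC.mono ((le_max_left _ _).trans ht)).2.1 hg₀ (fun i hi => hcov.1 ⟨i, hi⟩) hle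

theorem exists_forces (hC : IsGeneric C rep) {i : J} (θ : limit C ≃[𝓛] rep i) [Finite ι]
    (ii : ι → ℕ) (s₀ : ℕ) :
    ∃ s, s₀ ≤ s ∧ (C s).Forces ii (θ ∘ nameVal C ∘ ii) := by
  obtain ⟨q, ⟨e⟩⟩ := Finite.exists_equiv_fin ι
  obtain ⟨s, hs, -, hdec⟩ :=
    hC.decidesForcing (ii ∘ e.symm) (i := i) (θ ∘ nameVal C ∘ ii ∘ e.symm) s₀
  have h := hdec.resolve_right fun h => h (θ ∘ nameVal C) rfl ((hC.realizes_nameVal s).comp_equiv θ)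
  refine ⟨s, hs, fun C' g hβ hg₀ hg hreal => ?_⟩
  obtain ⟨z, hz, hz'⟩ := h C' g hβ hg₀ hg hreal
  exact ⟨z, e.symm.surjective.injective_comp_right hz, hz'⟩

-- Along the generic sequence the promises of a forcing condition are kept forever, so that they
-- fix the type of the names `ii` at every rank and not only at the rank of the condition.
theorem backForthLE_of_forces (hC : IsGeneric C rep) (hα : ω ≤ α) {i : J} (θ : limit C ≃[𝓛] rep i)
    [Finite ι] (γ : Ordinal.{0}) {ii : ι → ℕ} (hm₀ : ∀ i < m₀, i ∈ Set.range ii)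
    (h : (C s).Forces ii (θ ∘ nameVal C ∘ ii)) {z : ℕ → limit C} (hz : ∀ i < m₀, z i = nameVal C i)
    (hreal : (C s).Realizes z) : G.BackForthLE γ (nameVal C ∘ ii) (z ∘ ii) := by
  induction γ using WellFoundedLT.induction generalizing s ι z with
  | ind γ ih =>
  obtain ⟨g, rfl, hg, t₀, ht₀⟩ := hC.exists_names_of_forces h hz hreal
  refine (backForthLE_iff G).2 ⟨fun k _ => ?_, fun δ hδ d => ?_⟩
  · obtain ⟨t, ht, hcov⟩ :=
      hC.exists_covers (g ∘ ii) ((Ordinal.natCast_lt_omega0 k).trans_le hα) t₀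
    obtain ⟨z', hz', hreal'⟩ := ht₀ t ht
    have hgi : G.QFEq k ((C t).B ∘ g ∘ ii) (θ ∘ nameVal C ∘ ii) :=
      hz' ▸ (hreal'.backForthLE hcov).qfEq le_rfl
    exact ((G.qfEq_comp θ k _).trans hgi.symm).trans (hC.qfEq_nameVal hcov)
  · obtain ⟨x, rfl⟩ := nameVal_surjective d
    obtain ⟨t, ht, hF⟩ := hC.exists_forces θ ((g ∘ ii) ⌢ x) t₀
    obtain ⟨z', hz', hreal'⟩ := ht₀ t ht
    have hz'' : (θ.symm ∘ z') ∘ g ∘ ii = nameVal C ∘ ii := by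
      rw [Function.comp_assoc, hz']; funext i; simp
    refine ⟨θ.symm (z' x), ?_⟩
    have := ih δ hδ (fun i hi => ?_) hF (z := θ.symm ∘ z') (fun i hi => ?_) (hreal'.comp_equiv _)
    · rwa [comp_adjoin, comp_adjoin, hz''] at this
    · obtain ⟨y, rfl⟩ := hm₀ i hi
      exact ⟨some y, hg _ hi⟩
    · obtain ⟨y, rfl⟩ := hm₀ i hi
      have := congrFun hz'' y
      simp only [Function.comp_apply, hg _ hi] at this
      exact this

theorem exists_rank_indist (hC : IsGeneric C rep) (hα : ω ≤ α) {i : J} (θ : limit C ≃[𝓛] rep i)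
    [Finite ι] {b : ι → limit C} {p : limit C} (hp : p ∉ nameVal C '' Set.Iio m₀)
    (hpb : p ∉ Set.range b) :
    ∃ β < α, ∃ (q : ℕ) (a : Fin q → limit C), ∀ p',
      G.BackForthLE β ((fun l : {l // a l ≠ p} => a l) ⌢ p)
        ((fun l : {l // a l ≠ p} => a l) ⌢ p') → G.Indist (b ⌢ p) (b ⌢ p') := by
  classical
  obtain ⟨j, rfl⟩ := exists_nameVal_comp b
  obtain ⟨x, rfl⟩ := nameVal_surjective p
  obtain ⟨s, -, hF⟩ := hC.exists_forces θ (Sum.elim j (fun i : Fin m₀ => (i : ℕ)) ⌢ x) 0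
  refine ⟨(C s).β, (C s).β_lt, (C s).r, fun l => nameVal C l, fun p' h γ _ => ?_⟩
  have h' := hC.backForthLE_of_forces hα θ γ
    (fun i hi => ⟨some (.inr ⟨i, hi⟩), rfl⟩) hF
    (z := Function.update id (nameVal C x) p' ∘ nameVal C)
    (fun i hi => Function.update_of_ne (fun h => hp ⟨i, hi, h⟩) _ _)
    ((hC.realizes_nameVal s).trans h.update_id)
  have h'' := h'.reindex (Option.map Sum.inl)
  rw [Function.comp_assoc, Function.comp_assoc, adjoin_comp_map, Sum.elim_comp_inl,
    comp_adjoin, comp_adjoin, Function.comp_apply (g := nameVal C), Function.update_self] at h''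
  rwa [show (Function.update id (nameVal C x) p' ∘ nameVal C) ∘ j = nameVal C ∘ j from
    funext fun l => Function.update_of_ne (fun h => hpb ⟨l, h⟩) _ _] at h''

theorem thinOrbitPoints_limit_subset (hC : IsGeneric C rep) (hα : ω ≤ α) {i : J}
    (θ : limit C ≃[𝓛] rep i) : G.thinOrbitPoints (limit C) ⊆
      nameVal C '' Set.Iio m₀ ∪ ⋃ β < α, G.thinPoints (limit C) β := by
  rintro p ⟨w, b, hpb, hthin⟩
  refine or_iff_not_imp_left.2 fun hp => ?_
  obtain ⟨β, hβ, q, a, h⟩ := hC.exists_rank_indist hα θ hp hpb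
  exact Set.mem_biUnion hβ (IsThinOver.mem_thinPoints
    ⟨fun ⟨l, hl⟩ => l.2 hl, hthin.mono fun p' hp' => h p' hp'⟩)

end IsGeneric

theorem exists_limit [Countable N] [Nonempty N] [Countable J] (hα : ω ≤ α) (hα' : α < ω₁)
    (hN : G.LevelwiseEquiv N N) (rep : J → Type u) [∀ j, 𝓛.Structure (rep j)]
    [∀ j, Countable (rep j)] {S : Set N} (hS : S.Finite) (hSα : S ⊆ G.thinPoints N α) :
    ∃ (Y : Type u) (_ : 𝓛.Structure Y), Countable Y ∧ G.LevelwiseEquiv Y N ∧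
      (∃ f : N → Y, Set.InjOn f S ∧ Set.MapsTo f S (G.thinPoints Y α)) ∧
      ∃ T : Set Y, T.Finite ∧ ∀ j, Nonempty (Y ≃[𝓛] rep j) →
        G.thinOrbitPoints Y ⊆ T ∪ ⋃ β < α, G.thinPoints Y β := by
  obtain ⟨F, hF⟩ := exists_surjective_nat N
  let idx : N → ℕ := Function.surjInv hF
  have hidx : ∀ x, F (idx x) = x := Function.surjInv_eq hF
  choose w b hb using fun p : S => hSα p.2
  have := hS.to_subtype
  obtain ⟨m, hm⟩ :=
    ((Set.finite_iUnion fun p => (Set.finite_range (b p)).insert (p : N)).image idx).bddAbove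
  have hlt : ∀ p : S, ∀ x ∈ insert (p : N) (Set.range (b p)), idx x < m + 1 := fun p x hx =>
    Nat.lt_succ_of_le (hm ⟨x, Set.mem_iUnion_of_mem p hx, rfl⟩)
  obtain ⟨C, hC⟩ := exists_isGeneric (G := G) F (m + 1) hα hα' rep
  refine ⟨limit C, inferInstance, inferInstance, hC.levelwiseEquiv_limit hα hN,
    ⟨nameVal C ∘ idx, fun p hp p' hp' h => ?_, fun p hp => ?_⟩, nameVal C '' Set.Iio (m + 1),
    (Set.finite_Iio _).image _, fun j ⟨θ⟩ => hC.thinOrbitPoints_limit_subset hα θ⟩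
  · have hpp' : ∀ l, ![idx p, idx p'] l < m + 1 :=
      Fin.forall_fin_two.2 ⟨hlt ⟨p, hp⟩ p (.inl rfl), hlt ⟨p', hp'⟩ p' (.inl rfl)⟩
    have hq := hC.qfEq_nameVal (s := 0) (k := 0) (by simpa using Cond.covers_of_lt_m₀ hpp')
    rw [Cond.comp_eq_of_lt_m₀ hpp'] at hq
    simpa [hidx] using (hq.eq_iff 0 1).2 h
  · refine (hC.isThinOver_nameVal (b := idx ∘ b ⟨p, hp⟩) (fun i => hlt _ _ (.inr ⟨i, rfl⟩))
      (hlt ⟨p, hp⟩ p (.inl rfl)) ?_).mem_thinPoints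
    rw [← Function.comp_assoc, hidx, show F ∘ idx = id from funext hidx]
    exact hb ⟨p, hp⟩

end Grading

/-! ### Finiteness of the set of points with a thin orbit -/

namespace Grading

variable {𝓛 : FirstOrder.Language.{0, 0}} {G : Grading 𝓛}

section LevelwiseEquiv

variable {M M' M'' : Type u} [𝓛.Structure M] [𝓛.Structure M'] [𝓛.Structure M'']

theorem LevelwiseEquiv.exists_qfEq (h : G.LevelwiseEquiv M M') (k : ℕ) {ι : Type} [Finite ι]
    (a : ι → M) : ∃ b : ι → M', G.QFEq k a b := by
  refine Finite.induction_empty_option (P := fun ι => ∀ a : ι → M, ∃ b : ι → M', G.QFEq k a b)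
    (fun f ih a => ?_) (fun a => ?_) (fun ih a => ?_) ι a
  · obtain ⟨b, hb⟩ := ih (a ∘ f)
    have hb' := hb.reindex f.symm
    rw [Function.comp_assoc, Equiv.self_comp_symm] at hb'
    exact ⟨_, hb'⟩
  · refine ⟨PEmpty.elim, ?_⟩
    convert (h.qfEq_empty k).reindex (PEmpty.elim : PEmpty → Empty) <;> exact Subsingleton.elim _ _
  · obtain ⟨b, hb⟩ := ih (a ∘ some)
    obtain ⟨c, hc⟩ := h.forth hb (a none)
    rw [show (a ∘ some) ⌢ a none = a by funext o; cases o <;> rfl] at hc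
    exact ⟨_, hc⟩

theorem LevelwiseEquiv.trans (h : G.LevelwiseEquiv M M') (h' : G.LevelwiseEquiv M' M'') :
    G.LevelwiseEquiv M M'' where
  qfEq_empty k := (h.qfEq_empty k).trans (h'.qfEq_empty k)
  forth {k _ _ a _} hab d := by
    obtain ⟨b, hb⟩ := h.exists_qfEq k a
    obtain ⟨d', hd'⟩ := h.forth hb d
    obtain ⟨d'', hd''⟩ := h'.forth (hb.symm.trans hab) d'
    exact ⟨d'', hd'.trans hd''⟩
  back {k _ _ a _} hab d := by
    obtain ⟨b, hb⟩ := h.exists_qfEq k a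
    obtain ⟨d', hd'⟩ := h'.back (hb.symm.trans hab) d
    obtain ⟨d'', hd''⟩ := h.back hb d'
    exact ⟨d'', hd''.trans hd'⟩

end LevelwiseEquiv

variable {M₀ : Type u} [𝓛.Structure M₀] {J : Type} [Finite J] {rep : J → Type u}
  [∀ j, 𝓛.Structure (rep j)]

theorem exists_subset_thinPoints_of_infinite {N : Type u} [𝓛.Structure N] {α : Ordinal.{0}}
    (hinf : (⋃ β < α, G.thinPoints N β).Infinite) (m : ℕ) :
    ∃ S : Set N, S.Finite ∧ S.ncard = m + 1 ∧ ∃ β < α, S ⊆ G.thinPoints N β := by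
  obtain ⟨S, hS, hSfin, hScard⟩ := hinf.exists_subset_ncard_eq (m + 1)
  have hne : S.Nonempty := Set.nonempty_of_ncard_ne_zero (by omega)
  have hrank : ∀ p : S, ∃ β < α, p.1 ∈ G.thinPoints N β := fun p => by simpa using hS p.2
  choose β hβ hpβ using hrank
  have := hSfin.to_subtype
  have := hne.to_subtype
  obtain ⟨p₀, hp₀⟩ := Finite.exists_max β
  exact ⟨S, hSfin, hScard, β p₀, hβ p₀, fun p hp => thinPoints_mono (hp₀ ⟨p, hp⟩) (hpβ ⟨p, hp⟩)⟩

-- More than `m` thin points of ranks below `α`, with `m` exceeding the size of `thinOrbitPoints` in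
-- all `rep j`, persist in a countable model `Y` in which all points with thin orbit, up to finitely
-- many, are thin at a smaller rank. By induction `thinOrbitPoints Y` is finite, hence of size at
-- most `m`, a contradiction.
theorem finite_iUnion_thinPoints [𝓛.IsRelational] [∀ j, Countable (rep j)]
    (hrep : ∀ (M : Type u) [𝓛.Structure M], Countable M → G.LevelwiseEquiv M M₀ →
      ∃ j, Nonempty (M ≃[𝓛] rep j))
    {α : Ordinal.{0}} (hα : α < ω₁) {N : Type u} [𝓛.Structure N] [Countable N]
    (hN : G.LevelwiseEquiv N M₀) : (⋃ β < α, G.thinPoints N β).Finite := by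
  induction α using WellFoundedLT.induction generalizing N with
  | ind α ih =>
    by_contra hinf
    obtain ⟨m, hm⟩ := (Set.finite_range fun j => (G.thinOrbitPoints (rep j)).ncard).bddAbove
    obtain ⟨S, hSfin, hScard, β, hβ, hSβ⟩ := exists_subset_thinPoints_of_infinite hinf m
    obtain ⟨p₀, hp₀⟩ : S.Nonempty := Set.nonempty_of_ncard_ne_zero (by omega)
    have : Nonempty N := ⟨p₀⟩
    have hNN : G.LevelwiseEquiv N N := hN.trans hN.symm
    have hω : ω ≤ β := by
      by_contra! hlt
      obtain ⟨k, rfl⟩ := Ordinal.lt_omega0.1 hlt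
      exact (hNN.thinPoints_natCast k ▸ hSβ hp₀ : p₀ ∈ (∅ : Set N))
    have hβ' : β < ω₁ := hβ.trans hα
    obtain ⟨Y, _, _, hY, ⟨f, hf, hfS⟩, T, hT, hTY⟩ := exists_limit hω hβ' hNN rep hSfin hSβ
    obtain ⟨j, ⟨θ⟩⟩ := hrep Y inferInstance (hY.trans hN)
    have hYfin : (G.thinOrbitPoints Y).Finite :=
      (hT.union (ih β hβ hβ' (hY.trans hN))).subset (hTY j ⟨θ⟩)
    have hlt : m + 1 ≤ m := calc
      m + 1 = (f '' S).ncard := by rw [hf.ncard_image, hScard]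
      _ ≤ (G.thinOrbitPoints Y).ncard := Set.ncard_le_ncard
        (hfS.image_subset.trans (thinPoints_subset_thinOrbitPoints hβ')) hYfin
      _ = (G.thinOrbitPoints (rep j)).ncard := by
        rw [← image_thinOrbitPoints θ, Set.ncard_image_of_injective _ θ.injective]
      _ ≤ m := hm ⟨j, rfl⟩
    omega

theorem finite_thinOrbitPoints [𝓛.IsRelational]
    (hrep : ∀ (M : Type u) [𝓛.Structure M], Countable M → G.LevelwiseEquiv M M₀ →
      ∃ j, Nonempty (M ≃[𝓛] rep j))
    {N : Type u} [𝓛.Structure N] [Countable N] (hN : G.LevelwiseEquiv N M₀) :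
    (G.thinOrbitPoints N).Finite := by
  choose γ hγ hpγ using fun p : G.thinOrbitPoints N =>
    exists_mem_thinPoints_of_mem_thinOrbitPoints p.2
  have hrep' : ∀ (M : Type u) [𝓛.Structure M], Countable M → G.LevelwiseEquiv M M₀ →
      ∃ j : {j // Countable (rep j)}, Nonempty (M ≃[𝓛] rep j) := fun M _ hM hMM₀ =>
    let ⟨j, ⟨f⟩⟩ := hrep M hM hMM₀
    ⟨⟨j, f.toEquiv.symm.injective.countable⟩, ⟨f⟩⟩
  have (j : {j // Countable (rep j)}) : Countable (rep j) := j.2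
  refine (finite_iUnion_thinPoints hrep'
    (succ_lt_omega_one (Ordinal.iSup_lt_omega_one hγ)) hN).subset fun p hp => ?_
  exact Set.mem_biUnion (Order.lt_succ_of_le (Ordinal.le_iSup γ ⟨p, hp⟩)) (hpγ ⟨p, hp⟩)

theorem exists_basic_subset_orbit_of_notMem_thinOrbitPoints [𝓛.IsRelational] {N : Type u}
    [𝓛.Structure N] [Countable N] {p : N} (hp : p ∉ G.thinOrbitPoints N) {ι : Type} [Finite ι]
    {b : ι → N} (hpb : p ∉ Set.range b) :
    ∃ (q : ℕ) (e : Fin q → N) (k : ℕ) (c : N), c ∉ Set.range e ∧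
      ∀ c', G.QFEq k (e ⌢ c) (e ⌢ c') → ∃ τ : N ≃[𝓛] N, τ ∘ b = b ∧ τ p = c' := by
  obtain ⟨w, ⟨f⟩⟩ := Finite.exists_equiv_fin ι
  have hthin : ¬ G.IsThin {p' | G.Indist ((b ∘ f.symm) ⌢ p) ((b ∘ f.symm) ⌢ p')} :=
    fun h => hp ⟨w, _, by simpa using hpb, h⟩
  simp only [IsThin, not_forall, not_exists, not_and, not_not] at hthin
  obtain ⟨q, e, k, c, hce, hc⟩ := hthin
  refine ⟨q, e, k, c, hce, fun c' hc' => ?_⟩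
  have : Nonempty N := ⟨p⟩
  obtain ⟨τ, hτ⟩ := (hc c' hc').exists_equiv
  exact ⟨τ, funext fun i => by simpa using congrFun hτ (some (f i)), congrFun hτ none⟩

end Grading

/-! ### First-order formulas and the back-and-forth conditions -/

namespace Grading

variable {𝓛 : FirstOrder.Language.{0, 0}} (G : Grading 𝓛)
variable {M M' : Type u} [𝓛.Structure M] [𝓛.Structure M'] {ι : Type}

/-- Indices for the atomic formulas of level at most `k` with variables in `ι`, for a relational
language. -/
abbrev AtomIndex (k : ℕ) (ι : Type) : Type :=
  (ι × ι) ⊕ Σ r : {r : Σ n, 𝓛.Relations n // G.level r.2 ≤ k}, Fin r.1.1 → ι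

instance (k : ℕ) [Finite ι] : Finite (G.AtomIndex k ι) := by
  have := G.finite_level_le k
  infer_instance

variable {G} in
/-- The atomic formula with a given index. -/
def AtomIndex.formula {k : ℕ} : G.AtomIndex k ι → 𝓛.Formula ι
  | .inl x => (Term.var x.1).equal (Term.var x.2)
  | .inr x => x.1.1.2.formula fun i => Term.var (x.2 i)

theorem realize_rel_var {n : ℕ} {r : 𝓛.Relations n} {t : Fin n → ι} {a : ι → M} :
    (r.formula fun i => Term.var (t i)).Realize a ↔ RelMap r (a ∘ t) :=
  Formula.realize_rel

theorem qfEq_iff_forall_atomIndex {k : ℕ} {a : ι → M} {b : ι → M'} :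
    G.QFEq k a b ↔ ∀ x : G.AtomIndex k ι, x.formula.Realize a ↔ x.formula.Realize b := by
  refine ⟨fun h => ?_, fun h => ⟨fun i j => ?_, fun {n} r hr t => ?_⟩⟩
  · rintro (⟨i, j⟩ | ⟨⟨⟨n, r⟩, hr⟩, t⟩)
    · simpa [AtomIndex.formula, Formula.realize_equal] using h.eq_iff i j
    · exact realize_rel_var.trans ((h.rel_iff r hr t).trans realize_rel_var.symm)
  · simpa [AtomIndex.formula, Formula.realize_equal] using h (.inl (i, j))
  · exact realize_rel_var.symm.trans ((h (.inr ⟨⟨⟨n, r⟩, hr⟩, t⟩)).trans realize_rel_var)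

open Classical in
/-- The quantifier-free formula describing the quantifier-free type of level `k` of `a`. -/
noncomputable def diagram (k : ℕ) [Finite ι] (a : ι → M) : 𝓛.Formula ι :=
  Formula.iInf fun x : G.AtomIndex k ι => if x.formula.Realize a then x.formula else ∼x.formula

theorem realize_diagram {k : ℕ} [Finite ι] {a : ι → M} {b : ι → M'} :
    (G.diagram k a).Realize b ↔ G.QFEq k a b := by
  rw [diagram, Formula.realize_iInf, qfEq_iff_forall_atomIndex]
  refine forall_congr' fun x => ?_
  split_ifs with h <;> simp [h]

theorem exists_finite_forall_qfEq_adjoin (k : ℕ) [Finite ι] (a : ι → M) :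
    ∃ S : Set M, S.Finite ∧ ∀ c, ∃ c' ∈ S, G.QFEq k (a ⌢ c') (a ⌢ c) := by
  let type : M → Set (G.AtomIndex k (Option ι)) := fun c => {x | x.formula.Realize (a ⌢ c)}
  choose rep hrep using fun t : Set.range type => t.2
  refine ⟨Set.range rep, Set.finite_range rep, fun c => ⟨_, ⟨⟨type c, c, rfl⟩, rfl⟩, ?_⟩⟩
  exact (G.qfEq_iff_forall_atomIndex).2 fun x => (Set.ext_iff.1 (hrep ⟨type c, c, rfl⟩) x :)

/-- The formula `∃ y, φ (x, y)`, where `y` is the variable `none`. -/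
noncomputable def exNone (φ : 𝓛.Formula (Option ι)) : 𝓛.Formula ι :=
  (φ.relabel fun o => o.elim (Sum.inr ()) Sum.inl).iExs Unit

theorem realize_exNone {φ : 𝓛.Formula (Option ι)} {a : ι → M} :
    (exNone φ).Realize a ↔ ∃ c, φ.Realize (a ⌢ c) := by
  have h : ∀ c : Unit → M, Sum.elim a c ∘ (fun o : Option ι => o.elim (Sum.inr ()) Sum.inl) =
      a ⌢ c () := fun c => by funext o; cases o <;> rfl
  simp only [exNone, Formula.realize_iExs, Formula.realize_relabel, h]
  exact ⟨fun ⟨c, hc⟩ => ⟨c (), hc⟩, fun ⟨c, hc⟩ => ⟨fun _ => c, hc⟩⟩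

/-- `a` and `b` satisfy the same formulas of level `k` with at most one quantifier. -/
structure OneStepEq (k : ℕ) (a : ι → M) (b : ι → M') : Prop where
  qfEq : G.QFEq k a b
  forth : ∀ c, ∃ d, G.QFEq k (a ⌢ c) (b ⌢ d)
  back : ∀ d, ∃ c, G.QFEq k (a ⌢ c) (b ⌢ d)

theorem exists_formula_oneStepEq (k : ℕ) [Finite ι] (a : ι → M) :
    ∃ φ : 𝓛.Formula ι, ∀ {N : Type u} [𝓛.Structure N] (b : ι → N),
      φ.Realize b ↔ G.OneStepEq k a b := by
  obtain ⟨S, hS, hSa⟩ := G.exists_finite_forall_qfEq_adjoin k a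
  have := hS.to_subtype
  refine ⟨G.diagram k a ⊓ (Formula.iInf fun c : S => exNone (G.diagram k (a ⌢ c.1))) ⊓
    ∼(exNone ∼(Formula.iSup fun c : S => G.diagram k (a ⌢ c.1))), fun b => ?_⟩
  simp only [Formula.realize_inf, Formula.realize_iInf, Formula.realize_not, realize_exNone,
    Formula.realize_iSup, realize_diagram, not_exists_not]
  refine ⟨fun ⟨⟨h, hforth⟩, hback⟩ => ⟨h, fun c => ?_, fun d => ?_⟩,
    fun h => ⟨⟨h.qfEq, fun c => h.forth c⟩, fun d => ?_⟩⟩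
  · obtain ⟨c', hc', hcc'⟩ := hSa c
    obtain ⟨d, hd⟩ := hforth ⟨c', hc'⟩
    exact ⟨d, hcc'.symm.trans hd⟩
  · obtain ⟨c, hc⟩ := hback d
    exact ⟨c, hc⟩
  · obtain ⟨c, hc⟩ := h.back d
    obtain ⟨c', hc', hcc'⟩ := hSa c
    exact ⟨⟨c', hc'⟩, hcc'.trans hc⟩

theorem exists_oneStepEq (h : M ≅[𝓛] M') (k : ℕ) [Finite ι] (a : ι → M) :
    ∃ b : ι → M', G.OneStepEq k a b := by
  obtain ⟨φ, hφ⟩ := G.exists_formula_oneStepEq k a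
  have hex : ∀ {N : Type u} [𝓛.Structure N],
      N ⊨ ((φ.relabel Sum.inr : 𝓛.Formula (Empty ⊕ ι)).iExs ι : 𝓛.Sentence) ↔
        ∃ b : ι → N, G.OneStepEq k a b := by
    intro N _
    simp [Sentence.Realize, Formula.realize_relabel, hφ]
  exact hex.1 ((h.realize_sentence _).1 (hex.2 ⟨a, .refl k a, fun c => ⟨c, .refl k _⟩,
    fun c => ⟨c, .refl k _⟩⟩))

variable {G}

theorem levelwiseEquiv_of_forall_exists_oneStepEq {N : Type u} [𝓛.Structure N]
    (hN : G.LevelwiseEquiv N M')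
    (h : ∀ (k : ℕ) {ι : Type} [Finite ι] (a : ι → M), ∃ b : ι → N, G.OneStepEq k a b) :
    G.LevelwiseEquiv M M' where
  qfEq_empty k := by
    obtain ⟨b, hb⟩ := h k (Empty.elim : Empty → M)
    rw [Subsingleton.elim b Empty.elim] at hb
    exact hb.qfEq.trans (hN.qfEq_empty k)
  forth {k _ _ a _} hab d := by
    obtain ⟨c, hc⟩ := h k a
    obtain ⟨d', hd'⟩ := hc.forth d
    obtain ⟨d'', hd''⟩ := hN.forth (hc.qfEq.symm.trans hab) d'
    exact ⟨d'', hd'.trans hd''⟩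
  back {k _ _ a _} hab d := by
    obtain ⟨c, hc⟩ := h k a
    obtain ⟨d', hd'⟩ := hN.back (hc.qfEq.symm.trans hab) d
    obtain ⟨d'', hd''⟩ := hc.back d'
    exact ⟨d'', hd''.trans hd'⟩

section Realize

variable [𝓛.IsRelational] {α : Type} {n : ℕ}

theorem exists_var_eq (t : 𝓛.Term α) : ∃ i, t = Term.var i := by
  cases t with
  | var i => exact ⟨i, rfl⟩
  | func f _ => exact isEmptyElim f

theorem exists_forall_qfEq_realize_iff_of_isAtomic {φ : 𝓛.BoundedFormula α n} (hφ : φ.IsAtomic) :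
    ∃ k₀, ∀ k ≥ k₀, ∀ {M M' : Type u} [𝓛.Structure M] [𝓛.Structure M'] {x : α → M} {y : Fin n → M}
      {x' : α → M'} {y' : Fin n → M'}, G.QFEq k (Sum.elim x y) (Sum.elim x' y') →
      (φ.Realize x y ↔ φ.Realize x' y') := by
  cases hφ with
  | equal t₁ t₂ =>
    obtain ⟨i, rfl⟩ := exists_var_eq t₁
    obtain ⟨j, rfl⟩ := exists_var_eq t₂
    exact ⟨0, fun k _ _ _ _ _ _ _ _ _ h => by simpa using h.eq_iff i j⟩
  | rel r ts =>
    choose i hi using fun l => exists_var_eq (ts l)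
    obtain rfl : ts = fun l => Term.var (i l) := funext hi
    refine ⟨G.level r, fun k hk _ _ _ _ _ _ _ _ h => ?_⟩
    rw [BoundedFormula.realize_rel, BoundedFormula.realize_rel]
    exact h.rel_iff r hk i

theorem QFEq.realize_iff_of_isQF {k : ℕ} (hk : ∀ {n} (r : 𝓛.Relations n), G.level r ≤ k)
    {φ : 𝓛.Formula α} (hφ : φ.IsQF) {a : α → M} {b : α → M'} (h : G.QFEq k a b) :
    φ.Realize a ↔ φ.Realize b := by
  have h' : ∀ k', G.QFEq k' (Sum.elim a default : α ⊕ Fin 0 → M) (Sum.elim b default) := by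
    intro k'
    have h₁ := (⟨h.eq_iff, fun r _ => h.rel_iff r (hk r)⟩ : G.QFEq k' a b).reindex
      (Sum.elim id Fin.elim0)
    convert h₁ using 1 <;> exact funext fun i => i.rec (fun _ => rfl) fun j => j.elim0
  unfold Formula.Realize
  induction hφ with
  | falsum => exact Iff.rfl
  | of_isAtomic hφ =>
    obtain ⟨k₀, hk₀⟩ := exists_forall_qfEq_realize_iff_of_isAtomic (G := G) hφ
    exact hk₀ k₀ le_rfl (h' k₀)
  | imp _ _ h₁ h₂ => exact imp_congr h₁ h₂

theorem LevelwiseEquiv.exists_forall_qfEq_realize_iff [Finite α] (hM : G.LevelwiseEquiv M M')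
    (φ : 𝓛.BoundedFormula α n) :
    ∃ k₀, ∀ k ≥ k₀, ∀ {x : α → M} {y : Fin n → M} {x' : α → M'} {y' : Fin n → M'},
      G.QFEq k (Sum.elim x y) (Sum.elim x' y') → (φ.Realize x y ↔ φ.Realize x' y') := by
  induction φ with
  | falsum => exact ⟨0, fun _ _ _ _ _ _ _ => Iff.rfl⟩
  | equal t₁ t₂ =>
    obtain ⟨k₀, hk₀⟩ := exists_forall_qfEq_realize_iff_of_isAtomic (G := G) (.equal t₁ t₂)
    exact ⟨k₀, fun k hk _ _ _ _ h => hk₀ k hk h⟩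
  | rel r ts =>
    obtain ⟨k₀, hk₀⟩ := exists_forall_qfEq_realize_iff_of_isAtomic (G := G) (.rel r ts)
    exact ⟨k₀, fun k hk _ _ _ _ h => hk₀ k hk h⟩
  | imp _ _ ih₁ ih₂ =>
    obtain ⟨k₁, hk₁⟩ := ih₁
    obtain ⟨k₂, hk₂⟩ := ih₂
    exact ⟨max k₁ k₂, fun k hk _ _ _ _ h =>
      imp_congr (hk₁ k (by omega) h) (hk₂ k (by omega) h)⟩
  | @all n φ ih =>
    obtain ⟨k₀, hk₀⟩ := ih
    refine ⟨k₀, fun k hk x y x' y' h => ?_⟩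
    have hsnoc : ∀ {c c'}, G.QFEq k (Sum.elim x y ⌢ c) (Sum.elim x' y' ⌢ c') →
        (φ.Realize x (Fin.snoc y c) ↔ φ.Realize x' (Fin.snoc y' c')) := by
      intro c c' hcc'
      refine hk₀ k hk ?_
      convert hcc'.reindex (Sum.elim (some ∘ Sum.inl) (Fin.lastCases none (some ∘ Sum.inr)))
        using 1 <;> funext i <;> rcases i with i | i <;> try rfl
      all_goals refine Fin.lastCases ?_ (fun i => ?_) i <;> simp
    rw [BoundedFormula.realize_all, BoundedFormula.realize_all]
    refine ⟨fun H c' => ?_, fun H c => ?_⟩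
    · obtain ⟨c, hc⟩ := hM.back h c'
      exact (hsnoc hc).1 (H c)
    · obtain ⟨c', hc'⟩ := hM.forth h c
      exact (hsnoc hc').2 (H c')

theorem LevelwiseEquiv.elementarilyEquivalent (hM : G.LevelwiseEquiv M M') : M ≅[𝓛] M' := by
  refine elementarilyEquivalent_iff.2 fun φ => ?_
  obtain ⟨k, hk⟩ := hM.exists_forall_qfEq_realize_iff φ
  refine hk k le_rfl ?_
  convert (hM.qfEq_empty k).reindex (fun i : Empty ⊕ Fin 0 => i.elim id Fin.elim0) <;>
    exact funext fun i => i.rec (fun e => e.elim) fun j => j.elim0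

theorem QFEq.exists_adjoin_of_qe {k : ℕ} (hk : ∀ {n} (r : 𝓛.Relations n), G.level r ≤ k)
    (hqe : ∀ (n : ℕ) (φ : 𝓛.Formula (Fin n)), ∃ ψ : 𝓛.Formula (Fin n), ψ.IsQF ∧
      ∀ a : Fin n → M, φ.Realize a ↔ ψ.Realize a)
    [Finite ι] {a b : ι → M} (h : G.QFEq k a b) (d : M) :
    ∃ c, G.QFEq k (a ⌢ d) (b ⌢ c) := by
  obtain ⟨n, ⟨f⟩⟩ := Finite.exists_equiv_fin ι
  obtain ⟨ψ, hψ, hφψ⟩ := hqe n ((exNone (G.diagram k (a ⌢ d))).relabel f)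
  have hiff := (h.reindex f.symm).realize_iff_of_isQF hk hψ
  simp only [← hφψ, Formula.realize_relabel, Function.comp_assoc, Equiv.symm_comp_self,
    Function.comp_id, realize_exNone, realize_diagram] at hiff
  exact hiff.1 ⟨d, .refl k _⟩

theorem exists_embedding_of_surjective {a : ι → M} {b : ι → M'} (ha : Function.Surjective a)
    (h : ∀ k, G.QFEq k a b) : ∃ f : M ↪[𝓛] M', f ∘ a = b := by
  choose p hp using ha
  refine ⟨⟨⟨b ∘ p, fun x y hxy => ?_⟩, fun f => isEmptyElim f, fun r x => ?_⟩, ?_⟩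
  · rw [← hp x, ← hp y]
    exact ((h 0).eq_iff _ _).2 hxy
  · have hx : a ∘ p ∘ x = x := funext fun i => hp (x i)
    exact (hx ▸ ((h _).rel_iff r le_rfl (p ∘ x)).symm :)
  · exact funext fun i => ((h 0).eq_iff _ _).1 (hp (a i))

theorem exists_embedding_of_isUltrahomogeneous (hM' : 𝓛.IsUltrahomogeneous M') [Finite ι]
    {a : ι → M} {b : ι → M'} (h : ∀ k, G.QFEq k a b) (hMM' : Nonempty (M ↪[𝓛] M')) :
    ∃ f : M ↪[𝓛] M', f ∘ a = b := by
  let S : 𝓛.Substructure M := ⟨Set.range a, fun f => isEmptyElim f⟩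
  have : Finite S := Set.finite_range a
  let a' : ι → S := Set.rangeFactorization a
  obtain ⟨f, hf⟩ := exists_embedding_of_surjective (a := a') Set.rangeFactorization_surjective
    fun k => (G.qfEq_comp S.subtype k a').trans (h k)
  obtain ⟨g, rfl⟩ := hM'.extend_embedding .of_finite f S.subtype
  exact ⟨g, hf⟩

end Realize

end Grading

/-! ### The language `L ∪ L₀` -/

instance : Finite (Σ n, LRel n) :=
  Set.finite_univ_iff.1 <| Set.Finite.subset
    (s := {⟨1, .P⟩, ⟨1, .Q⟩, ⟨1, .lam⟩, ⟨1, .rho⟩, ⟨2, .H⟩, ⟨4, .S⟩}) (by simp)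
    fun ⟨_, r⟩ _ => by cases r <;> simp

instance (ar : ℕ → ℕ) (s : Set ℕ) : (L0r ar s).IsRelational := inferInstanceAs (∀ _, IsEmpty _)

instance (ar : ℕ → ℕ) (s : Set ℕ) : (LFull ar s).IsRelational := inferInstanceAs (∀ _, IsEmpty _)

section Full

variable {ar : ℕ → ℕ} {s : Set ℕ} {V V' : Type u} [(LFull ar s).Structure V]
  [(LFull ar s).Structure V'] {ι : Type}

/-- The grading of `L ∪ L₀` induced by a grading of `L₀`. Level `0` consists of the symbols of `L`,
and a symbol of `L₀` of level `k` gets level `k + 1`; hence `G.full.QFEq 0` is equality of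
quantifier-free `L`-types. -/
def Grading.full (G : Grading (L0r ar s)) : Grading (LFull ar s) where
  level r := Sum.elim (fun _ => 0) (fun r₀ => G.level r₀ + 1) r
  finite_level_le k := by
    have := G.finite_level_le k
    let f : {r : Σ n, (LFull ar s).Relations n // Sum.elim (fun _ => 0)
        (fun r₀ => G.level r₀ + 1) r.2 ≤ k} →
        (Σ n, LRel n) ⊕ {r : Σ n, (L0r ar s).Relations n // G.level r.2 ≤ k} := fun
      | ⟨⟨n, .inl r⟩, _⟩ => .inl ⟨n, r⟩
      | ⟨⟨n, .inr r⟩, h⟩ => .inr ⟨⟨n, r⟩, Nat.le_of_succ_le h⟩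
    refine Finite.of_injective f ?_
    rintro ⟨⟨n, r | r⟩, h⟩ ⟨⟨n', r' | r'⟩, h'⟩ hrr' <;> cases hrr' <;> rfl

namespace Grading.QFEq

variable {G : Grading (L0r ar s)} {k : ℕ} {a : ι → V} {b : ι → V'}

theorem isP_iff (h : G.full.QFEq k a b) (i : ι) : isP ar s (a i) ↔ isP ar s (b i) := by
  have := h.rel_iff (Sum.inl LRel.P) k.zero_le ![i]
  rwa [← FinVec.map_eq, ← FinVec.map_eq] at this

theorem isQ_iff (h : G.full.QFEq k a b) (i : ι) : isQ ar s (a i) ↔ isQ ar s (b i) := by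
  have := h.rel_iff (Sum.inl LRel.Q) k.zero_le ![i]
  rwa [← FinVec.map_eq, ← FinVec.map_eq] at this

theorem isLam_iff (h : G.full.QFEq k a b) (i : ι) : isLam ar s (a i) ↔ isLam ar s (b i) := by
  have := h.rel_iff (Sum.inl LRel.lam) k.zero_le ![i]
  rwa [← FinVec.map_eq, ← FinVec.map_eq] at this

theorem isRho_iff (h : G.full.QFEq k a b) (i : ι) : isRho ar s (a i) ↔ isRho ar s (b i) := by
  have := h.rel_iff (Sum.inl LRel.rho) k.zero_le ![i]
  rwa [← FinVec.map_eq, ← FinVec.map_eq] at this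

theorem isH_iff (h : G.full.QFEq k a b) (i j : ι) :
    isH ar s (a i) (a j) ↔ isH ar s (b i) (b j) := by
  have := h.rel_iff (Sum.inl LRel.H) k.zero_le ![i, j]
  rwa [← FinVec.map_eq, ← FinVec.map_eq] at this

theorem isS_iff (h : G.full.QFEq k a b) (i j i' j' : ι) :
    isS ar s (a i) (a j) (a i') (a j') ↔ isS ar s (b i) (b j) (b i') (b j') := by
  have := h.rel_iff (Sum.inl LRel.S) k.zero_le ![i, j, i', j']
  rwa [← FinVec.map_eq, ← FinVec.map_eq] at this

theorem full_succ (h : G.full.QFEq 0 a b)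
    (hR : ∀ {n} (r : (L0r ar s).Relations n), G.level r ≤ k → ∀ t : Fin n → ι,
      RelMap (L := LFull ar s) (Sum.inr r) (a ∘ t) ↔
        RelMap (L := LFull ar s) (Sum.inr r) (b ∘ t)) :
    G.full.QFEq (k + 1) a b where
  eq_iff := h.eq_iff
  rel_iff r hr t := match r with
    | .inl r => h.rel_iff (.inl r) le_rfl t
    | .inr r => hR r (Nat.le_of_succ_le_succ hr) t

theorem relMap_inr_iff (h : G.full.QFEq (k + 1) a b) {n : ℕ} (r : (L0r ar s).Relations n)
    (hr : G.level r ≤ k) (t : Fin n → ι) :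
    RelMap (L := LFull ar s) (Sum.inr r) (a ∘ t) ↔ RelMap (L := LFull ar s) (Sum.inr r) (b ∘ t) :=
  h.rel_iff (.inr r) (Nat.succ_le_succ hr) t

end Grading.QFEq

theorem IsNPair.map {G : Grading (L0r ar s)} {n m : ℕ} {a : Fin m → V} {c : Fin n → V}
    {a' : Fin m → V'} {c' : Fin n → V'} (hp : IsNPair ar s n m a c)
    (h : G.full.QFEq 0 (Sum.elim a c) (Sum.elim a' c')) : IsNPair ar s n m a' c' where
  le := hp.le
  aP i := (h.isP_iff (.inl i)).1 (hp.aP i)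
  cQ i := (h.isQ_iff (.inr i)).1 (hp.cQ i)
  inj i j hij := hp.inj ((h.eq_iff (.inr i) (.inr j)).2 hij)
  hH i j := (h.isH_iff (.inr i) (.inr j)).symm.trans (hp.hH i j)
  hlam i := (h.isLam_iff (.inr i)).symm.trans (hp.hlam i)
  hrho i := (h.isRho_iff (.inr i)).symm.trans (hp.hrho i)
  hS i k j l := (h.isS_iff (.inl i) (.inr j) (.inl k) (.inr l)).symm.trans
    ((hp.hS i k j l).trans (h.eq_iff (.inl i) (.inl k)))

/-- The defining conditions of `K` apart from finiteness and the condition on the `P`-part. -/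
structure IsAdmissible (ar : ℕ → ℕ) (s : Set ℕ) (V : Type u) [(LFull ar s).Structure V] : Prop
    extends IsGood ar s V where
  labels : ∀ (n : ℕ) (h₁ : 0 < n) (h₂ : n ∈ s) (a : Fin (ar n) → V) (c : Fin n → V),
    IsNPair ar s n (ar n) a c → RelMap (L := LFull ar s) (Sum.inr (R ar s n h₁ h₂)) a

theorem mem_Kclass_iff {M₀ : Type u} [(L0r ar s).Structure M₀] :
    (⟨V, inferInstance⟩ : Bundled (LFull ar s).Structure) ∈ Kclass ar s M₀ ↔
      Finite V ∧ IsAdmissible ar s V ∧ Nonempty (Ppart ar s V ↪[L0r ar s] M₀) :=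
  ⟨fun ⟨hfin, hgood, hP, hlabels⟩ => ⟨hfin, ⟨hgood, hlabels⟩, hP⟩,
    fun ⟨hfin, h, hP⟩ => ⟨hfin, h.toIsGood, hP, h.labels⟩⟩

theorem IsGood.not_isQ (hV : IsGood ar s V) {x : V} (hx : isP ar s x) : ¬ isQ ar s x :=
  fun hx' => hV.not_both x ⟨hx, hx'⟩

theorem IsGood.qfEq_zero_of_isP (G : Grading (L0r ar s)) (hV : IsGood ar s V)
    (hV' : IsGood ar s V') {a : ι → V} {b : ι → V'} (ha : ∀ i, isP ar s (a i))
    (hb : ∀ i, isP ar s (b i)) (hab : ∀ i j, a i = a j ↔ b i = b j) : G.full.QFEq 0 a b where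
  eq_iff := hab
  rel_iff r hr t := by
    obtain r | r := r
    · rw [← FinVec.map_eq, ← FinVec.map_eq]
      cases r with
      | P => exact iff_of_true (ha _) (hb _)
      | Q => exact iff_of_false (hV.not_isQ (ha _)) (hV'.not_isQ (hb _))
      | lam =>
        exact iff_of_false (fun h => hV.not_isQ (ha _) (hV.lam_q _ h))
          fun h => hV'.not_isQ (hb _) (hV'.lam_q _ h)
      | rho =>
        exact iff_of_false (fun h => hV.not_isQ (ha _) (hV.rho_q _ h))
          fun h => hV'.not_isQ (hb _) (hV'.rho_q _ h)
      | H =>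
        exact iff_of_false (fun h => hV.not_isQ (ha _) (hV.h_q _ _ h).1)
          fun h => hV'.not_isQ (hb _) (hV'.h_q _ _ h).1
      | S =>
        exact iff_of_false (fun h => hV.not_isQ (ha _) (hV.s_pq _ _ _ _ h).2.1)
          fun h => hV'.not_isQ (hb _) (hV'.s_pq _ _ _ _ h).2.1
    · exact absurd hr (Nat.not_succ_le_zero _)

end Full

/-! ### The generic structure of `K` and its `P`-part -/

section Generic

variable {ar : ℕ → ℕ} {s : Set ℕ} {V V' U : Type u} [(LFull ar s).Structure V]
  [(LFull ar s).Structure V'] [(LFull ar s).Structure U] {M₀ : Type u} [(L0r ar s).Structure M₀]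
  {ι : Type} {k : ℕ}

theorem isAdmissible_of_forall_exists_qfEq (G : Grading (L0r ar s))
    (h : ∀ (k : ℕ) {ι : Type} [Finite ι] (a : ι → V), ∃ (D : Bundled.{u} (LFull ar s).Structure)
      (b : ι → D), IsAdmissible ar s D ∧ G.full.QFEq k a b) :
    IsAdmissible ar s V where
  part x := by
    obtain ⟨D, b, hD, hb⟩ := h 0 ![x]
    exact (hD.part (b 0)).imp (hb.isP_iff 0).2 (hb.isQ_iff 0).2
  not_both x := by
    obtain ⟨D, b, hD, hb⟩ := h 0 ![x]
    exact fun hx => hD.not_both (b 0) (hx.imp (hb.isP_iff 0).1 (hb.isQ_iff 0).1)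
  lam_q x hx := by
    obtain ⟨D, b, hD, hb⟩ := h 0 ![x]
    exact (hb.isQ_iff 0).2 (hD.lam_q _ ((hb.isLam_iff 0).1 hx))
  rho_q x hx := by
    obtain ⟨D, b, hD, hb⟩ := h 0 ![x]
    exact (hb.isQ_iff 0).2 (hD.rho_q _ ((hb.isRho_iff 0).1 hx))
  h_q x y hxy := by
    obtain ⟨D, b, hD, hb⟩ := h 0 ![x, y]
    exact (hD.h_q _ _ ((hb.isH_iff 0 1).1 hxy)).imp (hb.isQ_iff 0).2 (hb.isQ_iff 1).2
  r_p n r t hr i := by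
    obtain ⟨D, b, hD, hb⟩ := h (G.level r + 1) t
    exact (hb.isP_iff i).2 (hD.r_p n r b ((hb.relMap_inr_iff r le_rfl id).1 hr) i)
  s_pq x y z w hS := by
    obtain ⟨D, b, hD, hb⟩ := h 0 ![x, y, z, w]
    obtain ⟨h₀, h₁, h₂, h₃⟩ := hD.s_pq _ _ _ _ ((hb.isS_iff 0 1 2 3).1 hS)
    exact ⟨(hb.isP_iff 0).2 h₀, (hb.isQ_iff 1).2 h₁, (hb.isP_iff 2).2 h₂, (hb.isQ_iff 3).2 h₃⟩
  labels n h₁ h₂ a c hp := by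
    obtain ⟨D, b, hD, hb⟩ := h (G.level (R ar s n h₁ h₂) + 1) (Sum.elim a c)
    have hp' : IsNPair ar s n (ar n) (b ∘ .inl) (b ∘ .inr) :=
      hp.map (G := G) (by rw [Sum.elim_comp_inl_inr]; exact hb.mono (Nat.zero_le _))
    exact (hb.relMap_inr_iff _ le_rfl .inl).2 (hD.labels n h₁ h₂ _ _ hp')

variable {G : Grading (L0r ar s)}

theorem Grading.QFEq.of_full {a : ι → Ppart ar s V} {b : ι → Ppart ar s V'}
    (h : G.full.QFEq (k + 1) (Subtype.val ∘ a) (Subtype.val ∘ b)) : G.QFEq k a b where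
  eq_iff i j := Subtype.ext_iff.trans ((h.eq_iff i j).trans Subtype.ext_iff.symm)
  rel_iff r hr t := h.relMap_inr_iff r hr t

theorem IsGood.qfEq_full (hV : IsGood ar s V) (hV' : IsGood ar s V') {a : ι → Ppart ar s V}
    {b : ι → Ppart ar s V'} (h : G.QFEq k a b) :
    G.full.QFEq (k + 1) (Subtype.val ∘ a) (Subtype.val ∘ b) :=
  (hV.qfEq_zero_of_isP G hV' (fun i => (a i).2) (fun i => (b i).2) fun i j =>
    Subtype.ext_iff.symm.trans ((h.eq_iff i j).trans Subtype.ext_iff)).full_succ h.rel_iff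

theorem exists_oneStepEq_ppart (G : Grading (L0r ar s)) (h : V ≅[LFull ar s] V') (k : ℕ)
    [Finite ι] (a : ι → Ppart ar s V) : ∃ b : ι → Ppart ar s V', G.OneStepEq k a b := by
  obtain ⟨b, hb⟩ := G.full.exists_oneStepEq h (k + 1) (Subtype.val ∘ a)
  lift b to ι → Ppart ar s V' using fun i => (hb.qfEq.isP_iff i).1 (a i).2
  refine ⟨b, .of_full hb.qfEq, fun c => ?_, fun d => ?_⟩
  · obtain ⟨d, hd⟩ := hb.forth c
    lift d to Ppart ar s V' using (hd.isP_iff none).1 c.2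
    exact ⟨d, .of_full (by rw [comp_adjoin, comp_adjoin]; exact hd)⟩
  · obtain ⟨c, hc⟩ := hb.back d
    lift c to Ppart ar s V using (hc.isP_iff none).2 d.2
    exact ⟨c, .of_full (by rw [comp_adjoin, comp_adjoin]; exact hc)⟩

theorem exists_isAdmissible_equiv_ppart (N : Type u) [(L0r ar s).Structure N] :
    ∃ X : Bundled.{u} (LFull ar s).Structure, IsAdmissible ar s X ∧ (∀ x : X, isP ar s x) ∧
      Nonempty (N ≃[L0r ar s] Ppart ar s X) := by
  let : (LFull ar s).Structure N :=
    { funMap := fun f => isEmptyElim f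
      RelMap := fun r t => match r with
        | .inl .P => True
        | .inl _ => False
        | .inr r => RelMap r t }
  have hP (x : N) : isP ar s x := trivial
  refine ⟨⟨N, this⟩, ?_, hP, ⟨⟨Equiv.subtypeUnivEquiv hP |>.symm, fun f => isEmptyElim f,
    fun _ _ => Iff.rfl⟩⟩⟩
  exact
    { part := fun x => .inl (hP x)
      not_both := fun _ h => h.2
      lam_q := fun _ h => h
      rho_q := fun _ h => h
      h_q := fun _ _ h => h.elim
      r_p := fun _ _ _ _ _ => hP _
      s_pq := fun _ _ _ _ h => h.elim
      labels := fun n h₁ _ _ _ hp => (hp.cQ ⟨0, h₁⟩).elim }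

variable [Countable U]

theorem exists_mem_Kclass_of_isFraisseLimit (hU : IsFraisseLimit (Kclass ar s M₀) U) [Finite ι]
    (a : ι → U) : ∃ D ∈ Kclass ar s M₀, ∃ (f : D ↪[LFull ar s] U) (d : ι → D), f ∘ d = a := by
  let S : (LFull ar s).Substructure U := ⟨Set.range a, fun f => isEmptyElim f⟩
  have : Finite S := Set.finite_range a
  exact ⟨.of S, hU.age ▸ age.fg_substructure .of_finite, S.subtype, Set.rangeFactorization a, rfl⟩

theorem exists_embedding_of_isFraisseLimit (hU : IsFraisseLimit (Kclass ar s M₀) U) {X : Type u}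
    [(LFull ar s).Structure X] [Finite X] (hX : IsAdmissible ar s X)
    (hXM : Nonempty (Ppart ar s X ↪[L0r ar s] M₀)) [Finite ι] {c : ι → X} {u : ι → U}
    (h : ∀ k, G.full.QFEq k c u) : ∃ f : X ↪[LFull ar s] U, f ∘ c = u := by
  have hage := mem_Kclass_iff.2 ⟨‹_›, hX, hXM⟩
  rw [← hU.age] at hage
  exact Grading.exists_embedding_of_isUltrahomogeneous hU.ultrahomogeneous h hage.2

theorem isAdmissible_of_isFraisseLimit (hU : IsFraisseLimit (Kclass ar s M₀) U)
    (G : Grading (L0r ar s)) : IsAdmissible ar s U :=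
  isAdmissible_of_forall_exists_qfEq G fun k _ _ a => by
    obtain ⟨D, hD, f, d, rfl⟩ := exists_mem_Kclass_of_isFraisseLimit hU a
    exact ⟨D, d, (mem_Kclass_iff.1 hD).2.1, (G.full.qfEq_comp f k d).symm⟩

theorem isAdmissible_of_elementarilyEquivalent (hU : IsFraisseLimit (Kclass ar s M₀) U)
    (G : Grading (L0r ar s)) (hVU : V ≅[LFull ar s] U) : IsAdmissible ar s V :=
  isAdmissible_of_forall_exists_qfEq G fun k _ _ a => by
    obtain ⟨b, hb⟩ := G.full.exists_oneStepEq hVU k a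
    exact ⟨⟨U, inferInstance⟩, b, isAdmissible_of_isFraisseLimit hU G, hb.qfEq⟩

theorem exists_forall_qfEq_of_isFraisseLimit (hU : IsFraisseLimit (Kclass ar s M₀) U)
    (G : Grading (L0r ar s)) [Finite ι] (a : ι → Ppart ar s U) :
    ∃ b : ι → M₀, ∀ k, G.QFEq k a b := by
  obtain ⟨D, hD, f, d, hd⟩ := exists_mem_Kclass_of_isFraisseLimit hU (Subtype.val ∘ a)
  obtain ⟨-, -, ⟨g⟩⟩ := mem_Kclass_iff.1 hD
  have hda (k : ℕ) : G.full.QFEq k d (Subtype.val ∘ a) := hd ▸ G.full.qfEq_comp f k d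
  lift d to ι → Ppart ar s D using fun i => ((hda 0).isP_iff i).2 (a i).2
  exact ⟨g ∘ d, fun k => (Grading.QFEq.of_full (hda (k + 1))).symm.trans (G.qfEq_comp g k d)⟩

theorem exists_embedding_of_finite_of_isFraisseLimit (hU : IsFraisseLimit (Kclass ar s M₀) U)
    (G : Grading (L0r ar s)) {N : Type u} [(L0r ar s).Structure N] [Finite N]
    (f : N ↪[L0r ar s] Ppart ar s U) : Nonempty (N ↪[L0r ar s] M₀) := by
  obtain ⟨n, ⟨e⟩⟩ := Finite.exists_equiv_fin N
  obtain ⟨b, hb⟩ := exists_forall_qfEq_of_isFraisseLimit hU G (f ∘ e.symm)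
  obtain ⟨g, -⟩ := Grading.exists_embedding_of_surjective e.symm.surjective
    fun k => (G.qfEq_comp f k e.symm).trans (hb k)
  exact ⟨g⟩

theorem exists_forall_qfEq_adjoin_of_isFraisseLimit (hU : IsFraisseLimit (Kclass ar s M₀) U)
    {a : ι → Ppart ar s U} {b : ι → M₀} [Finite ι] (h : ∀ k, G.QFEq k a b) (d : M₀) :
    ∃ c, ∀ k, G.QFEq k (a ⌢ c) (b ⌢ d) := by
  let S : (L0r ar s).Substructure M₀ := ⟨Set.range (b ⌢ d), fun f => isEmptyElim f⟩
  have : Finite S := Set.finite_range (b ⌢ d)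
  obtain ⟨X, hX, hXP, ⟨e⟩⟩ := exists_isAdmissible_equiv_ppart (ar := ar) (s := s) S
  have : Finite X := .of_surjective (fun x => (e x).1) fun x => ⟨e.symm ⟨x, hXP x⟩, by simp⟩
  let t : Option ι → S := Set.rangeFactorization (b ⌢ d)
  have ht (k : ℕ) : G.QFEq k (e ∘ t) (b ⌢ d) :=
    (G.qfEq_comp e k t).symm.trans (G.qfEq_comp S.subtype k t)
  have hU' := isAdmissible_of_isFraisseLimit hU G
  obtain ⟨f, hf⟩ := exists_embedding_of_isFraisseLimit hU hX ⟨S.subtype.comp e.symm.toEmbedding⟩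
    fun k => (hX.qfEq_full hU'.toIsGood
      (((ht k).reindex some).trans (h k).symm)).mono k.le_succ
  have hc (k : ℕ) := G.full.qfEq_comp f k (Subtype.val ∘ e ∘ t)
  let c : Ppart ar s U := ⟨f (e (t none)), ((hc 0).isP_iff none).1 (e (t none)).2⟩
  have hfc : f ∘ Subtype.val ∘ e ∘ t = Subtype.val ∘ a ⌢ c :=
    funext fun | none => rfl | some i => congrFun hf i
  exact ⟨c, fun k => (Grading.QFEq.of_full (hfc ▸ hc (k + 1))).symm.trans (ht k)⟩

theorem levelwiseEquiv_ppart_of_isFraisseLimit (hU : IsFraisseLimit (Kclass ar s M₀) U)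
    (hM₀ : G.LevelwiseEquiv M₀ M₀) : G.LevelwiseEquiv (Ppart ar s U) M₀ where
  qfEq_empty k := by
    obtain ⟨b, hb⟩ := exists_forall_qfEq_of_isFraisseLimit hU G Empty.elim
    exact Subsingleton.elim b Empty.elim ▸ hb k
  forth {k _ _ a b} hab d := by
    obtain ⟨e, he⟩ := exists_forall_qfEq_of_isFraisseLimit hU G (a ⌢ d)
    obtain ⟨c, hc⟩ := hM₀.forth (((he k).reindex some).symm.trans hab) (e none)
    refine ⟨c, (he k).trans ?_⟩
    rwa [← show (e ∘ some) ⌢ e none = e from funext fun | none => rfl | some _ => rfl]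
  back {k _ _ a b} hab d := by
    obtain ⟨e, he⟩ := exists_forall_qfEq_of_isFraisseLimit hU G a
    obtain ⟨d', hd'⟩ := hM₀.back ((he k).symm.trans hab) d
    obtain ⟨c, hc⟩ := exists_forall_qfEq_adjoin_of_isFraisseLimit hU he d'
    exact ⟨c, (hc k).trans hd'⟩

theorem levelwiseEquiv_ppart_of_elementarilyEquivalent (hU : IsFraisseLimit (Kclass ar s M₀) U)
    (hM₀ : G.LevelwiseEquiv M₀ M₀) (hVU : V ≅[LFull ar s] U) : G.LevelwiseEquiv (Ppart ar s V) M₀ :=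
  Grading.levelwiseEquiv_of_forall_exists_oneStepEq (levelwiseEquiv_ppart_of_isFraisseLimit hU hM₀)
    fun k _ _ a => exists_oneStepEq_ppart G hVU k a

end Generic

/-! ### One-point extensions -/

section OnePoint

variable {ar : ℕ → ℕ} {s : Set ℕ} {Y V W : Type u} [(LFull ar s).Structure Y]
  [(LFull ar s).Structure V] [(LFull ar s).Structure W] {G : Grading (L0r ar s)} {ι : Type}

variable (G ι Y V W) in
/-- Data for adding a point to an admissible structure `Y`: over the tuple `c` the new point is to
have the `L`-type of `x` over `a`, and over `Y` it is to have the `L₀`-type of `y₀` if it lies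
in `P`. -/
structure OnePointDatum where
  c : ι → Y
  a : ι → V
  x : V
  g : Y ↪[LFull ar s] W
  y₀ : W
  isAdmissible_base : IsAdmissible ar s Y
  isAdmissible_chart : IsAdmissible ar s V
  isGood_model : IsGood ar s W
  qfEq : G.full.QFEq 0 c a
  notMem_range : x ∉ Set.range a
  mem_range_of_isQ : ∀ y, isQ ar s y → y ∈ Set.range c
  isP_point : isP ar s x → isP ar s y₀ ∧ y₀ ∉ Set.range g
  relMap_point : ∀ (n : ℕ) (h₁ : 0 < n) (h₂ : n ∈ s), n ≤ Nat.card (Option ι) →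
    ∀ t : Fin (ar n) → Option ι, RelMap (L := LFull ar s) (Sum.inr (R ar s n h₁ h₂)) (a ⌢ x ∘ t) →
      RelMap (L := LFull ar s) (Sum.inr (R ar s n h₁ h₂)) ((g ∘ c) ⌢ y₀ ∘ t)

namespace OnePointDatum

variable (E : OnePointDatum Y V W G ι)

/-- The one-point extension of `Y` described by `E`, with `none` as the new point. -/
def Ext (_ : OnePointDatum Y V W G ι) : Type u := Option Y

instance [Finite Y] : Finite E.Ext := inferInstanceAs (Finite (Option Y))

/-- The part of the extension on which the `L`-structure is copied from `V`. -/
def chart : Option ι → E.Ext := Option.map E.c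

/-- The inclusion of `Y` in the extension. -/
def incl : Y → E.Ext := some

/-- The map to `W` along which the `L₀`-structure is pulled back. -/
def model : E.Ext → W := fun o => o.elim E.y₀ E.g

/-- The `L`-structure of the extension. `S` is made to hold between the new point and the points
of `P` outside the chart, so that no tuple containing both can be labelled. -/
inductive ExtRel : ∀ {n}, LRel n → (Fin n → E.Ext) → Prop
  | chart {n} (r : LRel n) (t : Fin n → Option ι) :
    RelMap (L := LFull ar s) (Sum.inl r) (E.a ⌢ E.x ∘ t) → ExtRel r (E.chart ∘ t)
  | incl {n} (r : LRel n) (t : Fin n → Y) :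
    RelMap (L := LFull ar s) (Sum.inl r) t → ExtRel r (E.incl ∘ t)
  | cross_left (p y z : Y) : isP ar s p → p ∉ Set.range E.c → isP ar s E.x → isQ ar s y →
    isQ ar s z → ExtRel .S ![E.incl p, E.incl y, E.chart none, E.incl z]
  | cross_right (p y z : Y) : isP ar s p → p ∉ Set.range E.c → isP ar s E.x → isQ ar s y →
    isQ ar s z → ExtRel .S ![E.chart none, E.incl y, E.incl p, E.incl z]

instance : (LFull ar s).Structure E.Ext where
  funMap f := isEmptyElim f
  RelMap r t := match r with
    | .inl r => E.ExtRel r t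
    | .inr r => RelMap (L := LFull ar s) (Sum.inr r) (E.model ∘ t) ∧
      (E.chart none ∈ Set.range t → isP ar s E.x)

theorem model_comp_chart : E.model ∘ E.chart = (E.g ∘ E.c) ⌢ E.y₀ := by
  funext o; cases o <;> rfl

theorem incl_ne_chart_none (y : Y) : E.incl y ≠ E.chart none := Option.some_ne_none y

theorem incl_injective : Function.Injective E.incl := Option.some_injective Y

theorem eq_chart_none_or_mem_range_incl (o : E.Ext) : o = E.chart none ∨ o ∈ Set.range E.incl :=
  match o with
  | none => .inl rfl
  | some y => .inr ⟨y, rfl⟩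

theorem mem_range_chart_iff {y : Y} : E.incl y ∈ Set.range E.chart ↔ y ∈ Set.range E.c :=
  ⟨fun ⟨o, ho⟩ => match o with
    | none => (E.incl_ne_chart_none y ho.symm).elim
    | some i => ⟨i, E.incl_injective ho⟩,
  fun ⟨i, hi⟩ => ⟨some i, congrArg E.incl hi⟩⟩

theorem exists_eq_some_comp {n : ℕ} {t : Fin n → Option ι} {t' : Fin n → Y}
    (h : E.chart ∘ t = E.incl ∘ t') : ∃ j, t = some ∘ j ∧ t' = E.c ∘ j := by
  have ht i : ∃ j, t i = some j := Option.ne_none_iff_exists'.1 fun hi =>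
    E.incl_ne_chart_none (t' i) <| (congrFun h i).symm.trans (congrArg E.chart hi)
  choose j hj using ht
  obtain rfl : t = some ∘ j := funext hj
  exact ⟨j, rfl, funext fun i => E.incl_injective (congrFun h i).symm⟩

theorem chart_eq_iff (o o' : Option ι) :
    E.chart o = E.chart o' ↔ (E.a ⌢ E.x) o = (E.a ⌢ E.x) o' :=
  match o, o' with
  | none, none => iff_of_true rfl rfl
  | none, some _ => iff_of_false (E.incl_ne_chart_none _).symm fun h => E.notMem_range ⟨_, h.symm⟩
  | some _, none => iff_of_false (E.incl_ne_chart_none _) fun h => E.notMem_range ⟨_, h⟩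
  | some i, some j => E.incl_injective.eq_iff.trans (E.qfEq.eq_iff i j)

theorem extRel_chart_iff {n : ℕ} {r : LRel n} {t : Fin n → Option ι} :
    E.ExtRel r (E.chart ∘ t) ↔ RelMap (L := LFull ar s) (Sum.inl r) (E.a ⌢ E.x ∘ t) := by
  refine ⟨fun h => ?_, .chart r t⟩
  generalize ht : E.chart ∘ t = t' at h
  cases h with
  | chart _ t' h =>
    have : E.a ⌢ E.x ∘ t = E.a ⌢ E.x ∘ t' :=
      funext fun i => (E.chart_eq_iff _ _).1 (congrFun ht i)
    rwa [this]
  | incl _ t' h =>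
    obtain ⟨j, rfl, rfl⟩ := E.exists_eq_some_comp ht
    exact (E.qfEq.rel_iff (.inl r) le_rfl j).1 h
  | cross_left _ _ _ _ hp => exact (hp (E.mem_range_chart_iff.1 ⟨t 0, congrFun ht 0⟩)).elim
  | cross_right _ _ _ _ hp => exact (hp (E.mem_range_chart_iff.1 ⟨t 2, congrFun ht 2⟩)).elim

theorem extRel_incl_iff {n : ℕ} {r : LRel n} {t : Fin n → Y} :
    E.ExtRel r (E.incl ∘ t) ↔ RelMap (L := LFull ar s) (Sum.inl r) t := by
  refine ⟨fun h => ?_, .incl r t⟩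
  generalize ht : E.incl ∘ t = t' at h
  cases h with
  | chart _ t' h =>
    obtain ⟨j, rfl, rfl⟩ := E.exists_eq_some_comp ht.symm
    exact (E.qfEq.rel_iff (.inl r) le_rfl j).2 h
  | incl _ t' h => rwa [E.incl_injective.comp_left ht]
  | cross_left => exact (E.incl_ne_chart_none _ (congrFun ht 2)).elim
  | cross_right => exact (E.incl_ne_chart_none _ (congrFun ht 0)).elim

theorem qfEq_chart : G.full.QFEq 0 E.chart (E.a ⌢ E.x) where
  eq_iff := E.chart_eq_iff
  rel_iff r hr _ := match r with
    | .inl _ => E.extRel_chart_iff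
    | .inr _ => absurd hr (Nat.not_succ_le_zero _)

theorem qfEq_incl {κ : Type} (k : ℕ) (t : κ → Y) : G.full.QFEq k (E.incl ∘ t) t where
  eq_iff _ _ := E.incl_injective.eq_iff
  rel_iff r _ t' := match r with
    | .inl _ => E.extRel_incl_iff
    | .inr r => (and_iff_left fun ⟨_, hi⟩ => (E.incl_ne_chart_none _ hi).elim).trans
        (StrongHomClass.map_rel E.g (Sum.inr r) (t ∘ t'))

theorem isP_chart_iff (o : Option ι) : isP ar s (E.chart o) ↔ isP ar s ((E.a ⌢ E.x) o) :=
  E.qfEq_chart.isP_iff o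

theorem isQ_chart_iff (o : Option ι) : isQ ar s (E.chart o) ↔ isQ ar s ((E.a ⌢ E.x) o) :=
  E.qfEq_chart.isQ_iff o

theorem isP_incl_iff (y : Y) : isP ar s (E.incl y) ↔ isP ar s y :=
  (E.qfEq_incl 0 ![y]).isP_iff 0

theorem isQ_incl_iff (y : Y) : isQ ar s (E.incl y) ↔ isQ ar s y :=
  (E.qfEq_incl 0 ![y]).isQ_iff 0

theorem isP_model {o : E.Ext} (ho : isP ar s o) : isP ar s (E.model o) := by
  obtain rfl | ⟨y, rfl⟩ := E.eq_chart_none_or_mem_range_incl o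
  · exact (E.isP_point ((E.isP_chart_iff none).1 ho)).1
  · exact ((G.full.qfEq_comp E.g 0 ![y]).isP_iff 0).1 ((E.isP_incl_iff y).1 ho)

theorem model_injOn : Set.InjOn E.model {o | isP ar s o} := by
  intro o ho o' ho' h
  obtain rfl | ⟨y, rfl⟩ := E.eq_chart_none_or_mem_range_incl o <;>
    obtain rfl | ⟨y', rfl⟩ := E.eq_chart_none_or_mem_range_incl o'
  · rfl
  · exact ((E.isP_point ((E.isP_chart_iff none).1 ho)).2 ⟨y', h.symm⟩).elim
  · exact ((E.isP_point ((E.isP_chart_iff none).1 ho')).2 ⟨y, h⟩).elim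
  · exact congrArg E.incl (E.g.injective h)

theorem relMap_inr_iff {n : ℕ} {r : (L0r ar s).Relations n} {t : Fin n → E.Ext}
    (ht : ∀ i, isP ar s (t i)) : RelMap (L := LFull ar s) (Sum.inr r) t ↔
      RelMap (L := LFull ar s) (Sum.inr r) (E.model ∘ t) :=
  and_iff_left fun ⟨i, hi⟩ => (E.isP_chart_iff none).1 (hi ▸ ht i)

/-- The embedding of `P`-parts induced by `model`. -/
def ppartModel : Ppart ar s E.Ext ↪[L0r ar s] Ppart ar s W where
  toFun o := ⟨E.model o.1, E.isP_model o.2⟩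
  inj' o o' h := Subtype.ext (E.model_injOn o.2 o'.2 (Subtype.ext_iff.1 h))
  map_fun' f := isEmptyElim f
  map_rel' _ t := (E.relMap_inr_iff fun i => (t i).2).symm

theorem isQ_of_isH {o o' : E.Ext} (h : isH ar s o o') : isQ ar s o ∧ isQ ar s o' := by
  change E.ExtRel _ _ at h
  generalize ht : ![o, o'] = t at h
  obtain ⟨rfl, rfl⟩ : o = t 0 ∧ o' = t 1 := ⟨congrFun ht 0, congrFun ht 1⟩
  cases h with
  | chart _ t h =>
    rw [← FinVec.map_eq] at h
    exact (E.isAdmissible_chart.h_q _ _ h).imp (E.isQ_chart_iff _).2 (E.isQ_chart_iff _).2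
  | incl _ t h =>
    rw [← Function.id_comp t, ← FinVec.map_eq] at h
    exact (E.isAdmissible_base.h_q _ _ h).imp (E.isQ_incl_iff _).2 (E.isQ_incl_iff _).2

theorem isP_of_relMap_inr {n : ℕ} {r : (L0r ar s).Relations n} {t : Fin n → E.Ext}
    (h : RelMap (L := LFull ar s) (Sum.inr r) t) (i : Fin n) : isP ar s (t i) := by
  have hi := E.isGood_model.r_p n r _ h.1 i
  obtain hti | ⟨y, hy⟩ := E.eq_chart_none_or_mem_range_incl (t i)
  · rw [hti]
    exact (E.isP_chart_iff none).2 (h.2 ⟨i, hti⟩)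
  · rw [← hy, E.isP_incl_iff]
    rw [Function.comp_apply, ← hy] at hi
    exact ((G.full.qfEq_comp E.g 0 ![y]).isP_iff 0).2 hi

theorem isP_isQ_of_isS {o₀ o₁ o₂ o₃ : E.Ext} (h : isS ar s o₀ o₁ o₂ o₃) :
    isP ar s o₀ ∧ isQ ar s o₁ ∧ isP ar s o₂ ∧ isQ ar s o₃ := by
  change E.ExtRel _ _ at h
  generalize ht : ![o₀, o₁, o₂, o₃] = t at h
  obtain ⟨rfl, rfl, rfl, rfl⟩ : o₀ = t 0 ∧ o₁ = t 1 ∧ o₂ = t 2 ∧ o₃ = t 3 :=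
    ⟨congrFun ht 0, congrFun ht 1, congrFun ht 2, congrFun ht 3⟩
  cases h with
  | chart _ t h =>
    rw [← FinVec.map_eq] at h
    obtain ⟨h₀, h₁, h₂, h₃⟩ := E.isAdmissible_chart.s_pq _ _ _ _ h
    exact ⟨(E.isP_chart_iff _).2 h₀, (E.isQ_chart_iff _).2 h₁, (E.isP_chart_iff _).2 h₂,
      (E.isQ_chart_iff _).2 h₃⟩
  | incl _ t h =>
    rw [← Function.id_comp t, ← FinVec.map_eq] at h
    obtain ⟨h₀, h₁, h₂, h₃⟩ := E.isAdmissible_base.s_pq _ _ _ _ h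
    exact ⟨(E.isP_incl_iff _).2 h₀, (E.isQ_incl_iff _).2 h₁, (E.isP_incl_iff _).2 h₂,
      (E.isQ_incl_iff _).2 h₃⟩
  | cross_left p y z hp _ hx hy hz =>
    exact ⟨(E.isP_incl_iff p).2 hp, (E.isQ_incl_iff y).2 hy, (E.isP_chart_iff none).2 hx,
      (E.isQ_incl_iff z).2 hz⟩
  | cross_right p y z hp _ hx hy hz =>
    exact ⟨(E.isP_chart_iff none).2 hx, (E.isQ_incl_iff y).2 hy, (E.isP_incl_iff p).2 hp,
      (E.isQ_incl_iff z).2 hz⟩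

theorem isGood : IsGood ar s E.Ext where
  part o := by
    obtain rfl | ⟨y, rfl⟩ := E.eq_chart_none_or_mem_range_incl o
    · exact (E.isAdmissible_chart.part E.x).imp (E.isP_chart_iff none).2 (E.isQ_chart_iff none).2
    · exact (E.isAdmissible_base.part y).imp (E.isP_incl_iff y).2 (E.isQ_incl_iff y).2
  not_both o := by
    obtain rfl | ⟨y, rfl⟩ := E.eq_chart_none_or_mem_range_incl o
    · exact fun h => E.isAdmissible_chart.not_both E.x
        (h.imp (E.isP_chart_iff none).1 (E.isQ_chart_iff none).1)
    · exact fun h => E.isAdmissible_base.not_both y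
        (h.imp (E.isP_incl_iff y).1 (E.isQ_incl_iff y).1)
  lam_q o h := by
    obtain rfl | ⟨y, rfl⟩ := E.eq_chart_none_or_mem_range_incl o
    · exact (E.isQ_chart_iff none).2
        (E.isAdmissible_chart.lam_q _ ((E.qfEq_chart.isLam_iff none).1 h))
    · exact (E.isQ_incl_iff y).2
        (E.isAdmissible_base.lam_q _ (((E.qfEq_incl 0 ![y]).isLam_iff 0).1 h))
  rho_q o h := by
    obtain rfl | ⟨y, rfl⟩ := E.eq_chart_none_or_mem_range_incl o
    · exact (E.isQ_chart_iff none).2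
        (E.isAdmissible_chart.rho_q _ ((E.qfEq_chart.isRho_iff none).1 h))
    · exact (E.isQ_incl_iff y).2
        (E.isAdmissible_base.rho_q _ (((E.qfEq_incl 0 ![y]).isRho_iff 0).1 h))
  h_q _ _ := E.isQ_of_isH
  r_p _ _ _ := E.isP_of_relMap_inr
  s_pq _ _ _ _ := E.isP_isQ_of_isS

theorem qfEq_model {κ : Type} (k : ℕ) {o : κ → E.Ext} (ho : ∀ i, isP ar s (o i)) :
    G.full.QFEq k o (E.model ∘ o) := by
  lift o to κ → Ppart ar s E.Ext using ho
  exact (E.isGood.qfEq_full E.isGood_model (G.qfEq_comp E.ppartModel k o)).mono k.le_succ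

theorem mem_range_chart_of_isQ {o : E.Ext} (ho : isQ ar s o) : o ∈ Set.range E.chart := by
  obtain rfl | ⟨y, rfl⟩ := E.eq_chart_none_or_mem_range_incl o
  · exact ⟨none, rfl⟩
  · exact E.mem_range_chart_iff.2 (E.mem_range_of_isQ y ((E.isQ_incl_iff y).1 ho))

theorem labels_of_chart [Finite ι] {n : ℕ} (h₁ : 0 < n) (h₂ : n ∈ s) {a : Fin (ar n) → Option ι}
    {c : Fin n → Option ι} (hp : IsNPair ar s n (ar n) (E.chart ∘ a) (E.chart ∘ c)) :
    RelMap (L := LFull ar s) (Sum.inr (R ar s n h₁ h₂)) (E.chart ∘ a) := by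
  have hpV : IsNPair ar s n (ar n) (E.a ⌢ E.x ∘ a) (E.a ⌢ E.x ∘ c) := hp.map (G := G) <| by
    simpa only [Sum.comp_elim] using E.qfEq_chart.reindex (Sum.elim a c)
  have hn : n ≤ Nat.card (Option ι) := by
    simpa using Nat.card_le_card_of_injective c hp.inj.of_comp
  rw [E.relMap_inr_iff hp.aP, ← Function.comp_assoc, model_comp_chart]
  exact E.relMap_point n h₁ h₂ hn a (E.isAdmissible_chart.labels n h₁ h₂ _ _ hpV)

theorem labels_of_incl {n : ℕ} (h₁ : 0 < n) (h₂ : n ∈ s) {a : Fin (ar n) → Y}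
    {c : Fin n → Y} (hp : IsNPair ar s n (ar n) (E.incl ∘ a) (E.incl ∘ c)) :
    RelMap (L := LFull ar s) (Sum.inr (R ar s n h₁ h₂)) (E.incl ∘ a) := by
  have hpY : IsNPair ar s n (ar n) a c := hp.map (G := G) <| by
    simpa only [Sum.comp_elim] using E.qfEq_incl 0 (Sum.elim a c)
  exact ((E.qfEq_incl _ a).relMap_inr_iff _ le_rfl id).2
    (E.isAdmissible_base.labels n h₁ h₂ _ _ hpY)

theorem not_isS_incl_chart_none {p : Y} (hp : p ∉ Set.range E.c) {o o' : E.Ext} :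
    ¬ isS ar s (E.incl p) (E.chart none) o o' := by
  intro h
  change E.ExtRel _ _ at h
  generalize ht : ![E.incl p, E.chart none, o, o'] = t at h
  cases h with
  | chart _ t => exact hp (E.mem_range_chart_iff.1 ⟨t 0, (congrFun ht 0).symm⟩)
  | incl _ t => exact E.incl_ne_chart_none _ (congrFun ht 1).symm
  | cross_left => exact E.incl_ne_chart_none _ (congrFun ht 1).symm
  | cross_right => exact E.incl_ne_chart_none _ (congrFun ht 0)

-- An entry `p` of `a` outside the chart would have to be `S`-related to itself along the new point
-- if the latter occurred in `c`, and not to the latter along `c` if it occurred in `a`.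
theorem ne_chart_none_of_isNPair {n m : ℕ} (hn : 0 < n) {a : Fin m → E.Ext} {c : Fin n → E.Ext}
    (hp : IsNPair ar s n m a c) {i : Fin m} (hi : a i ∉ Set.range E.chart) :
    (∀ j, c j ≠ E.chart none) ∧ ∀ i', a i' ≠ E.chart none := by
  obtain hai | ⟨p, hpi⟩ := E.eq_chart_none_or_mem_range_incl (a i)
  · exact (hi ⟨none, hai.symm⟩).elim
  have hpc : p ∉ Set.range E.c := fun h => hi (hpi ▸ E.mem_range_chart_iff.2 h)
  have hc (j) : c j ≠ E.chart none := fun hj =>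
    E.not_isS_incl_chart_none hpc (hj ▸ hpi ▸ (hp.hS i i j j).2 rfl)
  refine ⟨hc, fun i' hi' => ?_⟩
  obtain hj | ⟨y, hy⟩ := E.eq_chart_none_or_mem_range_incl (c ⟨0, hn⟩)
  · exact hc _ hj
  have hS : isS ar s (a i) (c ⟨0, hn⟩) (a i') (c ⟨0, hn⟩) := by
    rw [← hpi, hi', ← hy]
    exact .cross_left p y y ((E.isP_incl_iff p).1 (hpi ▸ hp.aP i)) hpc
      ((E.isP_chart_iff none).1 (hi' ▸ hp.aP i')) ((E.isQ_incl_iff y).1 (hy ▸ hp.cQ _))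
      ((E.isQ_incl_iff y).1 (hy ▸ hp.cQ _))
  exact E.incl_ne_chart_none p (hpi.trans (((hp.hS _ _ _ _).1 hS).trans hi'))

theorem isAdmissible [Finite ι] : IsAdmissible ar s E.Ext where
  toIsGood := E.isGood
  labels n h₁ h₂ a c hp := by
    by_cases ha : ∀ i, a i ∈ Set.range E.chart
    · choose a' ha' using ha
      choose c' hc' using fun j => E.mem_range_chart_of_isQ (hp.cQ j)
      obtain ⟨rfl, rfl⟩ : a = E.chart ∘ a' ∧ c = E.chart ∘ c' := by simp [funext_iff, ha', hc']
      exact E.labels_of_chart h₁ h₂ hp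
    · obtain ⟨i, hi⟩ := not_forall.1 ha
      obtain ⟨hc, ha⟩ := E.ne_chart_none_of_isNPair h₁ hp hi
      choose a' ha' using fun i => (E.eq_chart_none_or_mem_range_incl (a i)).resolve_left (ha i)
      choose c' hc' using fun j => (E.eq_chart_none_or_mem_range_incl (c j)).resolve_left (hc j)
      obtain ⟨rfl, rfl⟩ : a = E.incl ∘ a' ∧ c = E.incl ∘ c' := by simp [funext_iff, ha', hc']
      exact E.labels_of_incl h₁ h₂ hp

end OnePointDatum

end OnePoint

section Extension

variable {ar : ℕ → ℕ} {s : Set ℕ} {V V' U : Type u} [(LFull ar s).Structure V]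
  [(LFull ar s).Structure V'] [(LFull ar s).Structure U] {M₀ : Type u} [(L0r ar s).Structure M₀]
  {ι κ : Type} [Finite ι] [Finite κ] [Countable U] {G : Grading (L0r ar s)}

theorem OnePointDatum.exists_point {Y : Type u} [(LFull ar s).Structure Y] [Finite Y]
    (E : OnePointDatum Y V U G ι) (hU : IsFraisseLimit (Kclass ar s M₀) U) :
    ∃ y : U, G.full.QFEq 0 (E.a ⌢ E.x) ((E.g ∘ E.c) ⌢ y) ∧
      (isP ar s E.x → ∀ (k : ℕ) {ι' : Type} (t : ι' → Y), (∀ l, isP ar s (t l)) →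
        G.full.QFEq k ((E.g ∘ t) ⌢ y) ((E.g ∘ t) ⌢ E.y₀)) := by
  obtain ⟨n, ⟨e⟩⟩ := Finite.exists_equiv_fin Y
  obtain ⟨f, hf⟩ := exists_embedding_of_isFraisseLimit hU (X := E.Ext) E.isAdmissible
    (exists_embedding_of_finite_of_isFraisseLimit hU G E.ppartModel)
    fun k => (E.qfEq_incl k e.symm).trans (G.full.qfEq_comp E.g k e.symm)
  have hfg (y : Y) : f (E.incl y) = E.g y := by simpa using congrFun hf (e y)
  refine ⟨f (E.chart none), ?_, fun hx k ι' t ht => ?_⟩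
  · have hf_chart : f ∘ E.chart = (E.g ∘ E.c) ⌢ f (E.chart none) := by
      funext o
      cases o with
      | none => rfl
      | some i => exact hfg (E.c i)
    exact hf_chart ▸ E.qfEq_chart.symm.trans (G.full.qfEq_comp f 0 E.chart)
  · let o : Option ι' → E.Ext := (E.incl ∘ t) ⌢ E.chart none
    have ho : ∀ l, isP ar s (o l) := fun
      | none => (E.isP_chart_iff none).2 hx
      | some l => (E.isP_incl_iff _).2 (ht l)
    have hfo : f ∘ o = (E.g ∘ t) ⌢ f (E.chart none) :=
      (comp_adjoin ..).trans (congrArg (· ⌢ _) (funext fun l => hfg (t l)))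
    have hmo : E.model ∘ o = (E.g ∘ t) ⌢ E.y₀ := comp_adjoin ..
    rw [← hfo, ← hmo]
    exact (G.full.qfEq_comp f k o).symm.trans (E.qfEq_model k ho)

theorem exists_point_of_isFraisseLimit (hU : IsFraisseLimit (Kclass ar s M₀) U)
    (hV : IsAdmissible ar s V) {u : κ → U} {j : ι → κ} {a : ι → V} {x : V} {y₀ : U}
    (h : G.full.QFEq 0 (u ∘ j) a) (hx : x ∉ Set.range a)
    (hu : ∀ i, isQ ar s (u i) → u i ∈ Set.range (u ∘ j))
    (hy₀ : isP ar s x → isP ar s y₀ ∧ y₀ ∉ Set.range u)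
    (hR : ∀ (n : ℕ) (h₁ : 0 < n) (h₂ : n ∈ s), n ≤ Nat.card (Option ι) →
      ∀ t : Fin (ar n) → Option ι, RelMap (L := LFull ar s) (Sum.inr (R ar s n h₁ h₂)) (a ⌢ x ∘ t) →
        RelMap (L := LFull ar s) (Sum.inr (R ar s n h₁ h₂)) ((u ∘ j) ⌢ y₀ ∘ t)) :
    ∃ y : U, G.full.QFEq 0 (a ⌢ x) ((u ∘ j) ⌢ y) ∧
      (isP ar s x → ∀ (k : ℕ) {ι' : Type} (t : ι' → κ), (∀ l, isP ar s (u (t l))) →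
        G.full.QFEq k ((u ∘ t) ⌢ y) ((u ∘ t) ⌢ y₀)) := by
  have hU' := isAdmissible_of_isFraisseLimit hU G
  let Y : (LFull ar s).Substructure U := ⟨Set.range u, fun f => isEmptyElim f⟩
  let v : κ → Y := Set.rangeFactorization u
  have : Finite Y := Set.finite_range u
  have hvu {κ' : Type} (i : κ' → κ) : G.full.QFEq 0 (v ∘ i) (u ∘ i) :=
    G.full.qfEq_comp Y.subtype 0 (v ∘ i)
  let E : OnePointDatum Y V U G ι :=
    { c := v ∘ j
      a, x, y₀
      g := Y.subtype
      isAdmissible_base := isAdmissible_of_forall_exists_qfEq G fun k _ _ y =>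
        ⟨⟨U, inferInstance⟩, Y.subtype ∘ y, hU', G.full.qfEq_comp Y.subtype k y⟩
      isAdmissible_chart := hV
      isGood_model := hU'.toIsGood
      qfEq := (hvu j).trans h
      notMem_range := hx
      mem_range_of_isQ := by
        rintro ⟨_, i, rfl⟩ hi
        obtain ⟨i', hi'⟩ := hu i (((hvu id).isQ_iff i).1 hi)
        exact ⟨i', Subtype.ext hi'⟩
      isP_point := fun hxP => ⟨(hy₀ hxP).1, fun ⟨y, hy⟩ => (hy₀ hxP).2 (hy ▸ y.2)⟩
      relMap_point := hR }
  obtain ⟨y, hy, hyP⟩ := E.exists_point hU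
  exact ⟨y, hy, fun hxP k _ t ht => hyP hxP k (v ∘ t) fun l => ((hvu t).isP_iff l).2 (ht l)⟩

theorem exists_adjoin_of_elementarilyEquivalent (hU : IsFraisseLimit (Kclass ar s M₀) U)
    (hV : IsAdmissible ar s V) (hVU : V' ≅[LFull ar s] U) {a : ι → V} {a' : ι → V'} {x : V}
    {c : V'} {e : κ → V'} (k : ℕ) (h : G.full.QFEq 0 a a') (hx : x ∉ Set.range a)
    (he : ∀ i, isP ar s (e i))
    (hc : isP ar s x → isP ar s c ∧ c ∉ Set.range a' ∧ c ∉ Set.range e)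
    (hR : ∀ (n : ℕ) (h₁ : 0 < n) (h₂ : n ∈ s) (t : Fin (ar n) → Option ι),
      RelMap (L := LFull ar s) (Sum.inr (R ar s n h₁ h₂)) (a ⌢ x ∘ t) →
        RelMap (L := LFull ar s) (Sum.inr (R ar s n h₁ h₂)) (a' ⌢ c ∘ t)) :
    ∃ x' : V', G.full.QFEq 0 (a ⌢ x) (a' ⌢ x') ∧
      (isP ar s x → G.full.QFEq k (e ⌢ x') (e ⌢ c)) := by
  obtain ⟨K, hkK, hK⟩ : ∃ K, k ≤ K ∧ ∀ n ∈ Set.Iic (Nat.card (Option ι)), ∀ (h₁ : 0 < n)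
      (h₂ : n ∈ s), G.level (R ar s n h₁ h₂) + 1 ≤ K :=
    ((Filter.eventually_ge_atTop k).and <| (Filter.eventually_all_finite (Set.finite_Iic _)).2
      fun _ _ => Filter.eventually_all.2 fun _ => Filter.eventually_all.2 fun _ =>
        Filter.eventually_ge_atTop _).exists
  obtain ⟨u, hu⟩ := G.full.exists_oneStepEq hVU K (Sum.elim a' e)
  obtain ⟨y₀, hy₀⟩ := hu.forth c
  have hinl {z : V'} {w : U} (h : G.full.QFEq K (Sum.elim a' e ⌢ z) (u ⌢ w)) :
      G.full.QFEq K (a' ⌢ z) ((u ∘ Sum.inl) ⌢ w) := by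
    simpa only [adjoin_comp_map, Sum.elim_comp_inl] using h.reindex (Option.map Sum.inl)
  have hinr {z : V'} {w : U} (h : G.full.QFEq K (Sum.elim a' e ⌢ z) (u ⌢ w)) :
      G.full.QFEq k (e ⌢ z) ((u ∘ Sum.inr) ⌢ w) := by
    simpa only [adjoin_comp_map, Sum.elim_comp_inr] using
      (h.reindex (Option.map Sum.inr)).mono hkK
  have huP (i : κ) : isP ar s (u (.inr i)) := (hu.qfEq.isP_iff (.inr i)).1 (he i)
  have huQ : ∀ i, isQ ar s (u i) → u i ∈ Set.range (u ∘ Sum.inl) := by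
    rintro (i | i) hi
    · exact ⟨i, rfl⟩
    · exact ((isAdmissible_of_isFraisseLimit hU G).not_isQ (huP i) hi).elim
  have hy₀P : isP ar s x → isP ar s y₀ ∧ y₀ ∉ Set.range u := by
    refine fun hxP => ⟨(hy₀.isP_iff none).1 (hc hxP).1, ?_⟩
    rintro ⟨i | i, hi⟩
    · exact (hc hxP).2.1 ⟨i, (hy₀.eq_iff (some (.inl i)) none).2 hi⟩
    · exact (hc hxP).2.2 ⟨i, (hy₀.eq_iff (some (.inr i)) none).2 hi⟩
  obtain ⟨y, hy, hyP⟩ := exists_point_of_isFraisseLimit hU hV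
    (((hu.qfEq.mono K.zero_le).reindex Sum.inl).symm.trans h.symm) hx huQ hy₀P
    fun n h₁ h₂ hn t ht =>
      ((hinl hy₀).rel_iff (.inr (R ar s n h₁ h₂)) (hK n hn h₁ h₂) t).1 (hR n h₁ h₂ t ht)
  obtain ⟨x', hx'⟩ := hu.back y
  exact ⟨x', hy.trans ((hinl hx').mono K.zero_le).symm,
    fun hxP => (hinr hx').trans ((hyP hxP k Sum.inr huP).trans (hinr hy₀).symm)⟩

end Extension

/-! ### Lifting isomorphisms of `P`-parts -/

section Lift

variable {ar : ℕ → ℕ} {s : Set ℕ} {V V' U : Type u} [(LFull ar s).Structure V]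
  [(LFull ar s).Structure V'] [(LFull ar s).Structure U] {M₀ : Type u} [(L0r ar s).Structure M₀]
  {ι : Type} {G : Grading (L0r ar s)} {a : ι → V} {b : ι → V'}

/-- `σ` takes every entry of `a` in the `P`-part to the entry of `b` with the same index. -/
def MapsEntries (σ : Ppart ar s V ≃[L0r ar s] Ppart ar s V') (a : ι → V) (b : ι → V') : Prop :=
  ∀ i (p : Ppart ar s V), a i = p → b i = σ p

theorem MapsEntries.symm {σ : Ppart ar s V ≃[L0r ar s] Ppart ar s V'} (hσ : MapsEntries σ a b)
    (h : G.full.QFEq 0 a b) : MapsEntries σ.symm b a := fun i p hp => by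
  have hi : isP ar s (a i) := (h.isP_iff i).2 (hp ▸ p.2)
  have : p = σ ⟨a i, hi⟩ := Subtype.ext (hp.symm.trans (hσ i ⟨a i, hi⟩ rfl))
  rw [this, σ.symm_apply_apply]

theorem MapsEntries.relMap_inr {σ : Ppart ar s V ≃[L0r ar s] Ppart ar s V'}
    (hσ : MapsEntries σ a b) (hV : IsGood ar s V) {n : ℕ} {r : (L0r ar s).Relations n}
    {t : Fin n → ι} (h : RelMap (L := LFull ar s) (Sum.inr r) (a ∘ t)) :
    RelMap (L := LFull ar s) (Sum.inr r) (b ∘ t) := by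
  let p : Fin n → Ppart ar s V := fun i => ⟨a (t i), hV.r_p n r _ h i⟩
  have hp : b ∘ t = Subtype.val ∘ σ ∘ p := funext fun i => hσ (t i) (p i) rfl
  rw [hp]
  exact (σ.map_rel r p).2 h

variable (G) in
/-- The correspondences between tuples of `V` and `V'` along which an isomorphism of `P`-parts is
lifted: `a` and `b` have the same quantifier-free `L`-type, some isomorphism of `P`-parts maps
`a` to `b`, and all points with thin orbit are entries. -/
structure PpartCorr (a : ι → V) (b : ι → V') : Prop where
  qfEq : G.full.QFEq 0 a b
  exists_mapsEntries : ∃ σ : Ppart ar s V ≃[L0r ar s] Ppart ar s V', MapsEntries σ a b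
  thin_left : ∀ p ∈ G.thinOrbitPoints (Ppart ar s V), (p : V) ∈ Set.range a
  thin_right : ∀ p ∈ G.thinOrbitPoints (Ppart ar s V'), (p : V') ∈ Set.range b

namespace PpartCorr

theorem symm (h : PpartCorr G a b) : PpartCorr G b a where
  qfEq := h.qfEq.symm
  exists_mapsEntries := h.exists_mapsEntries.imp' (·.symm) fun _ hσ => hσ.symm h.qfEq
  thin_left := h.thin_right
  thin_right := h.thin_left

theorem forall_qfEq (h : PpartCorr G a b) (hV : IsGood ar s V) (hV' : IsGood ar s V') (k : ℕ) :
    G.full.QFEq k a b := by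
  obtain ⟨σ, hσ⟩ := h.exists_mapsEntries
  exact (h.qfEq.full_succ fun _ _ _ =>
    ⟨hσ.relMap_inr hV, (hσ.symm h.qfEq).relMap_inr hV'⟩).mono k.le_succ

theorem adjoin (h : PpartCorr G a b) {x : V} {y : V'} (hxy : G.full.QFEq 0 (a ⌢ x) (b ⌢ y))
    {σ : Ppart ar s V ≃[L0r ar s] Ppart ar s V'} (hσ : MapsEntries σ (a ⌢ x) (b ⌢ y)) :
    PpartCorr G (a ⌢ x) (b ⌢ y) where
  qfEq := hxy
  exists_mapsEntries := ⟨σ, hσ⟩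
  thin_left p hp := (h.thin_left p hp).imp' some fun _ hi => hi
  thin_right p hp := (h.thin_right p hp).imp' some fun _ hi => hi

theorem adjoin_apply (h : PpartCorr G a b) (i : ι) : PpartCorr G (a ⌢ a i) (b ⌢ b i) := by
  obtain ⟨σ, hσ⟩ := h.exists_mapsEntries
  have hi {W : Type u} (c : ι → W) : c ⌢ c i = c ∘ fun o => o.elim i id := by
    funext o; cases o <;> rfl
  refine h.adjoin (σ := σ) ?_ ?_ <;> rw [hi, hi]
  · exact h.qfEq.reindex _
  · exact fun o => hσ _

variable [Finite ι] [Countable U]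

theorem exists_adjoin_of_isQ (hU : IsFraisseLimit (Kclass ar s M₀) U) (hVU : V ≅[LFull ar s] U)
    (hV'U : V' ≅[LFull ar s] U) (h : PpartCorr G a b) {x : V} (hx : isQ ar s x)
    (hxa : x ∉ Set.range a) : ∃ y, PpartCorr G (a ⌢ x) (b ⌢ y) := by
  have hV := isAdmissible_of_elementarilyEquivalent hU G hVU
  obtain ⟨σ, hσ⟩ := h.exists_mapsEntries
  have hxP : ¬ isP ar s x := fun hxP => hV.not_isQ hxP hx
  have hσ' (y : V') : MapsEntries σ (a ⌢ x) (b ⌢ y) := fun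
    | none => fun p hp => (hxP (hp ▸ p.2 :)).elim
    | some i => hσ i
  obtain ⟨c, -⟩ := G.full.exists_oneStepEq (hVU.trans hV'U.symm) 0 ![x]
  obtain ⟨y, hy, -⟩ := exists_adjoin_of_elementarilyEquivalent hU hV hV'U (c := c 0)
    (e := Empty.elim) 0 h.qfEq hxa (fun i => i.elim) (fun hx => (hxP hx).elim)
    fun n h₁ h₂ t => (hσ' _).relMap_inr hV.toIsGood
  exact ⟨y, h.adjoin hy (hσ' y)⟩

theorem exists_adjoin_of_isP [Countable V'] (hU : IsFraisseLimit (Kclass ar s M₀) U)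
    (hVU : V ≅[LFull ar s] U) (hV'U : V' ≅[LFull ar s] U) (h : PpartCorr G a b) {x : V}
    (hx : isP ar s x) (hxa : x ∉ Set.range a) : ∃ y, PpartCorr G (a ⌢ x) (b ⌢ y) := by
  have hV := isAdmissible_of_elementarilyEquivalent hU G hVU
  obtain ⟨σ, hσ⟩ := h.exists_mapsEntries
  let p : Ppart ar s V' := σ ⟨x, hx⟩
  have hpb : (p : V') ∉ Set.range b := fun ⟨i, hi⟩ =>
    hxa ⟨i, by simpa [p] using hσ.symm h.qfEq i p hi⟩
  let b₀ : {i // isP ar s (b i)} → Ppart ar s V' := fun i => ⟨b i, i.2⟩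
  have hpb₀ : p ∉ Set.range b₀ := fun ⟨i, hi⟩ => hpb ⟨i, congrArg Subtype.val hi⟩
  have hτσ {τ : Ppart ar s V' ≃[L0r ar s] Ppart ar s V'} (hτ : τ ∘ b₀ = b₀) :
      MapsEntries (τ.comp σ) (a ⌢ x) (b ⌢ (τ p : V')) := by
    rintro (_ | i) p' (hp' : _ = _)
    · obtain rfl : ⟨x, hx⟩ = p' := Subtype.ext hp'
      rfl
    · have hi : b i = σ p' := hσ i p' hp'
      have hτi : τ (σ p') = σ p' := by
        simpa [b₀, hi] using congrFun hτ ⟨i, hi ▸ (σ p').2⟩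
      exact hi.trans (congrArg Subtype.val hτi.symm)
  obtain ⟨q, e, k, c, hce, hc⟩ := Grading.exists_basic_subset_orbit_of_notMem_thinOrbitPoints
    (fun hp => hpb (h.thin_right p hp)) hpb₀
  obtain ⟨τ, hτ, rfl⟩ := hc c (.refl _ _)
  have hτpb : (τ p : V') ∉ Set.range b := fun ⟨i, hi⟩ =>
    have hi' : b₀ ⟨i, hi ▸ (τ p).2⟩ = τ p := Subtype.ext hi
    hpb₀ ⟨_, τ.injective ((congrFun hτ _).trans hi')⟩
  obtain ⟨y, hy, hyc⟩ := exists_adjoin_of_elementarilyEquivalent hU hV hV'U (c := τ p)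
    (e := Subtype.val ∘ e) (k + 1) h.qfEq hxa (fun i => (e i).2)
    (fun _ => ⟨(τ p).2, hτpb, fun ⟨i, hi⟩ => hce ⟨i, Subtype.ext hi⟩⟩)
    fun n h₁ h₂ t => (hτσ hτ).relMap_inr hV.toIsGood
  lift y to Ppart ar s V' using (hy.isP_iff none).1 hx
  have hyc' : G.QFEq k (e ⌢ y) (e ⌢ τ p) :=
    .of_full (by simpa only [comp_adjoin] using hyc hx)
  obtain ⟨τ', hτ', rfl⟩ := hc y hyc'.symm
  exact ⟨_, h.adjoin hy (hτσ hτ')⟩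

theorem exists_adjoin [Countable V'] (hU : IsFraisseLimit (Kclass ar s M₀) U)
    (hVU : V ≅[LFull ar s] U) (hV'U : V' ≅[LFull ar s] U) (h : PpartCorr G a b) (x : V) :
    ∃ y, PpartCorr G (a ⌢ x) (b ⌢ y) := by
  by_cases hxa : x ∈ Set.range a
  · obtain ⟨i, rfl⟩ := hxa
    exact ⟨b i, h.adjoin_apply i⟩
  · obtain hx | hx := (isAdmissible_of_elementarilyEquivalent hU G hVU).part x
    · exact h.exists_adjoin_of_isP hU hVU hV'U hx hxa
    · exact h.exists_adjoin_of_isQ hU hVU hV'U hx hxa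

end PpartCorr

theorem nonempty_equiv_of_ppart_equiv [Countable U] [Countable V] [Countable V']
    (hU : IsFraisseLimit (Kclass ar s M₀) U) (hVU : V ≅[LFull ar s] U) (hV'U : V' ≅[LFull ar s] U)
    (hfin : (G.thinOrbitPoints (Ppart ar s V)).Finite)
    (σ : Ppart ar s V ≃[L0r ar s] Ppart ar s V') : Nonempty (V ≃[LFull ar s] V') := by
  have hV := (isAdmissible_of_elementarilyEquivalent hU G hVU).toIsGood
  have hV' := (isAdmissible_of_elementarilyEquivalent hU G hV'U).toIsGood
  obtain ⟨n, t, -, ht⟩ := hfin.fin_param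
  have hcorr : PpartCorr G (Subtype.val ∘ t) (Subtype.val ∘ σ ∘ t) :=
    { qfEq := (hV.qfEq_full hV' (G.qfEq_comp σ 0 t)).mono zero_le_one
      exists_mapsEntries := ⟨σ, fun i p hp => congrArg (Subtype.val ∘ σ) (Subtype.ext hp)⟩
      thin_left := fun p hp => by
        rw [← ht] at hp
        exact Set.range_comp .. ▸ Set.mem_image_of_mem _ hp
      thin_right := fun p hp => by
        rw [← Grading.image_thinOrbitPoints σ, ← ht, ← Set.range_comp] at hp
        exact Set.range_comp .. ▸ Set.mem_image_of_mem _ hp }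
  obtain ⟨f, -⟩ := G.full.exists_equiv_of_backForth (Φ := PpartCorr G)
    (fun h => h.forall_qfEq hV hV') (fun h => h.exists_adjoin hU hVU hV'U)
    (fun h y => (h.symm.exists_adjoin hU hV'U hVU y).imp fun _ hx => hx.symm) hcorr
  exact ⟨f⟩

end Lift

/-! ### Counting countable models -/

section Count

variable {ar : ℕ → ℕ} {li : ℕ → ℕ}

/-- The grading of `L₀` whose language of level at most `i` is the finite sublanguage with cutoff
`li i`. -/
def cutoffGrading (ar : ℕ → ℕ) (s : Set ℕ) (hmono : Monotone li) (hcof : ∀ n, ∃ i, n ≤ li i) :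
    Grading (L0r ar s) where
  level r := Nat.find (hcof r.1)
  finite_level_le k := by
    refine Finite.of_injective (β := Set.Iic (li k))
      (fun r => ⟨r.1.2.1, (Nat.find_spec (hcof _)).trans (hmono r.2)⟩) ?_
    rintro ⟨⟨n, r, hr⟩, _⟩ ⟨⟨n', r', hr'⟩, _⟩ h
    obtain rfl : r = r' := congrArg Subtype.val h
    obtain rfl : n = n' := hr.2.2.symm.trans hr'.2.2
    rfl

theorem cutoffGrading_level_le_iff {s : Set ℕ} (hmono : Monotone li) (hcof : ∀ n, ∃ i, n ≤ li i)
    {n k : ℕ} (r : (L0r ar s).Relations n) :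
    (cutoffGrading ar s hmono hcof).level r ≤ k ↔ r.1 ≤ li k :=
  ⟨fun h => (Nat.find_spec (hcof r.1)).trans (hmono h), fun h => Nat.find_min' _ h⟩

variable {M₀ : Type u} [(L0r ar Set.univ).Structure M₀]

theorem qfEq_cutoffGrading_M0redStr_iff (hmono : Monotone li) (hcof : ∀ n, ∃ i, n ≤ li i)
    {ι : Type} {k : ℕ} {a b : ι → M₀} :
    let := M0redStr ar (li k) M₀
    (cutoffGrading ar (setLe (li k)) hmono hcof).QFEq k a b ↔
      (cutoffGrading ar Set.univ hmono hcof).QFEq k a b := by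
  let := M0redStr ar (li k) M₀
  exact ⟨fun h => ⟨h.eq_iff, fun r hr t =>
      h.rel_iff ⟨r.1, r.2.1, (cutoffGrading_level_le_iff hmono hcof r).1 hr, r.2.2.2⟩ hr t⟩,
    fun h => ⟨h.eq_iff, fun r hr t => h.rel_iff (L0incl ar (Set.subset_univ _) |>.onRelation r)
      hr t⟩⟩

theorem levelwiseEquiv_cutoffGrading (hmono : Monotone li) (hcof : ∀ n, ∃ i, n ≤ li i)
    (hqe : ∀ (i k : ℕ) (φ : (L0r ar (setLe (li i))).Formula (Fin k)),
      ∃ ψ : (L0r ar (setLe (li i))).Formula (Fin k), ψ.IsQF ∧ ∀ a : Fin k → M₀,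
        Formula.Realize (L := L0r ar Set.univ) ((L0incl ar (Set.subset_univ _)).onFormula φ) a ↔
        Formula.Realize (L := L0r ar Set.univ) ((L0incl ar (Set.subset_univ _)).onFormula ψ) a) :
    (cutoffGrading ar Set.univ hmono hcof).LevelwiseEquiv M₀ M₀ := by
  have extend {k : ℕ} {ι : Type} [Finite ι] {a b : ι → M₀}
      (h : (cutoffGrading ar Set.univ hmono hcof).QFEq k a b) (d : M₀) :
      ∃ c, (cutoffGrading ar Set.univ hmono hcof).QFEq k (a ⌢ d) (b ⌢ c) := by
    let := M0redStr ar (li k) M₀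
    have : (L0incl ar (Set.subset_univ (setLe (li k)))).IsExpansionOn M₀ :=
      LHom.isExpansionOn_reduct _ _
    have hqe := hqe k
    simp only [LHom.realize_onFormula] at hqe
    simp only [← qfEq_cutoffGrading_M0redStr_iff] at h ⊢
    exact h.exists_adjoin_of_qe
      (fun r => (cutoffGrading_level_le_iff hmono hcof r).2 r.2.2.1) hqe d
  exact ⟨fun k => .refl k _, extend, fun h d => (extend h.symm d).imp fun _ => Grading.QFEq.symm⟩

theorem elementarilyEquivalent_of_model_completeTheory {𝓛 : FirstOrder.Language.{0, 0}}
    {M N : Type u} [𝓛.Structure M] [𝓛.Structure N] [N ⊨ 𝓛.completeTheory M] : N ≅[𝓛] M :=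
  elementarilyEquivalent_iff.2 fun φ => realize_iff_of_model_completeTheory M N φ

theorem exists_rep_of_isFraisseLimit {s : Set ℕ} {M₀ U : Type u} [(L0r ar s).Structure M₀]
    [(LFull ar s).Structure U] [Countable U] (hU : IsFraisseLimit (Kclass ar s M₀) U)
    {G : Grading (L0r ar s)} (hM₀ : G.LevelwiseEquiv M₀ M₀) {J : Type} [Finite J]
    (rep : J → Bundled.{u} (L0r ar s).Structure)
    (hrep : ∀ M : Bundled.{u} (L0r ar s).Structure, Countable M →
      Theory.Model M ((L0r ar s).completeTheory M₀) → ∃ j, Nonempty (M ≃[L0r ar s] rep j)) :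
    ∃ rep' : J → Bundled.{u} (LFull ar s).Structure,
      ∀ V : Bundled.{u} (LFull ar s).Structure, Countable V →
        Theory.Model V ((LFull ar s).completeTheory U) →
        ∃ j, Nonempty (V ≃[LFull ar s] rep' j) := by
  have hrepG (M : Type u) [(L0r ar s).Structure M] (hM : Countable M)
      (hMM₀ : G.LevelwiseEquiv M M₀) : ∃ j, Nonempty (M ≃[L0r ar s] rep j) :=
    hrep (.of M) hM hMM₀.elementarilyEquivalent.symm.theory_model
  have hppart {V : Bundled.{u} (LFull ar s).Structure} (hVU : V ≅[LFull ar s] U) :=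
    levelwiseEquiv_ppart_of_elementarilyEquivalent hU hM₀ hVU
  let HasPpart (j : J) (V : Bundled.{u} (LFull ar s).Structure) : Prop :=
    Countable V ∧ (V ≅[LFull ar s] U) ∧ Nonempty (Ppart ar s V ≃[L0r ar s] rep j)
  have : Nonempty (Bundled.{u} (LFull ar s).Structure) := ⟨.of U⟩
  refine ⟨fun j => Classical.epsilon (HasPpart j), fun V hV hVmodel => ?_⟩
  have hVU : V ≅[LFull ar s] U := elementarilyEquivalent_of_model_completeTheory
  obtain ⟨j, hj⟩ := hrepG (Ppart ar s V) inferInstance (hppart hVU)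
  obtain ⟨hW, hWU, ⟨g⟩⟩ := Classical.epsilon_spec (p := HasPpart j) ⟨V, hV, hVU, hj⟩
  obtain ⟨f⟩ := hj
  exact ⟨j, nonempty_equiv_of_ppart_equiv hU hVU hWU
    (Grading.finite_thinOrbitPoints hrepG (hppart hVU)) (g.symm.comp f)⟩

theorem statement_15_general (ar li : ℕ → ℕ) (hli_mono : Monotone li) (hli_cof : ∀ n, ∃ i, n ≤ li i)
    (M₀ : Type u) [(L0r ar Set.univ).Structure M₀]
    (hqe : ∀ (i k : ℕ) (φ : (L0r ar (setLe (li i))).Formula (Fin k)),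
      ∃ ψ : (L0r ar (setLe (li i))).Formula (Fin k), ψ.IsQF ∧ ∀ a : Fin k → M₀,
        Formula.Realize (L := L0r ar Set.univ) ((L0incl ar (Set.subset_univ _)).onFormula φ) a ↔
        Formula.Realize (L := L0r ar Set.univ) ((L0incl ar (Set.subset_univ _)).onFormula ψ) a)
    (U : Type u) [(LFull ar Set.univ).Structure U] [Countable U]
    (hU : IsFraisseLimit (Kclass ar Set.univ M₀) U) (n : ℕ)
    (h : ∃ rep : Fin n → Bundled.{u} (L0r ar Set.univ).Structure,
      ∀ M : Bundled.{u} (L0r ar Set.univ).Structure, Countable M →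
        Theory.Model M ((L0r ar Set.univ).completeTheory M₀) →
        ∃ i, Nonempty (M ≃[L0r ar Set.univ] rep i)) :
    ∃ rep : Fin n → Bundled.{u} (LFull ar Set.univ).Structure,
      ∀ V : Bundled.{u} (LFull ar Set.univ).Structure, Countable V →
        Theory.Model V ((LFull ar Set.univ).completeTheory U) →
        ∃ i, Nonempty (V ≃[LFull ar Set.univ] rep i) :=
  let ⟨rep, hrep⟩ := h
  exists_rep_of_isFraisseLimit hU (levelwiseEquiv_cutoffGrading hli_mono hli_cof hqe) rep hrep

end Count

/-- If `Th(M₀)` is Ehrenfeucht (finitely many countable models up to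
isomorphism) then so is the theory of the generic structure `U`; indeed, for every `n`, if
`Th(M₀)` has at most `n` countable models up to isomorphism then so does `Th(U)`. -/
theorem statement_15
    (ar : ℕ → ℕ)
    (har_le : ∀ n : ℕ, 0 < n → ar n ≤ n)
    (har_mono : ∀ m n : ℕ, 0 < m → m ≤ n → ar m ≤ ar n)
    (li : ℕ → ℕ) (hli_pos : ∀ i, 0 < li i) (hli_mono : StrictMono li)
    (hli_cof : ∀ n : ℕ, ∃ i, n ≤ li i)
    (hli_arity : ∀ i : ℕ, ar (li i) < ar (li (i + 1)))
    (M₀ : Type u) [(L0r ar Set.univ).Structure M₀] [Countable M₀] [Infinite M₀]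
    (hqe : ∀ (i k : ℕ) (φ : (L0r ar (setLe (li i))).Formula (Fin k)),
      ∃ ψ : (L0r ar (setLe (li i))).Formula (Fin k), ψ.IsQF ∧
        ∀ a : Fin k → M₀,
          Formula.Realize (L := L0r ar Set.univ)
              ((L0incl ar (Set.subset_univ _)).onFormula φ) a ↔
            Formula.Realize (L := L0r ar Set.univ)
              ((L0incl ar (Set.subset_univ _)).onFormula ψ) a)
    (hM0hom : (L0r ar Set.univ).IsUltrahomogeneous M₀)
    (hM0jep : JointEmbedding ((L0r ar Set.univ).age M₀))
    (hM0ap : Amalgamation ((L0r ar Set.univ).age M₀))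
    (U : Type u) [(LFull ar Set.univ).Structure U] [Countable U]
    (hUhom : (LFull ar Set.univ).IsUltrahomogeneous U)
    (hUage : (LFull ar Set.univ).age U = Kclass ar Set.univ M₀) :
    ∀ n : ℕ,
      (∃ rep : Fin n → Bundled.{u} (L0r ar Set.univ).Structure,
        ∀ M : Bundled.{u} (L0r ar Set.univ).Structure, Countable M →
          Theory.Model M ((L0r ar Set.univ).completeTheory M₀) →
          ∃ i, Nonempty (M ≃[L0r ar Set.univ] rep i)) →
      (∃ rep : Fin n → Bundled.{u} (LFull ar Set.univ).Structure,
        ∀ V : Bundled.{u} (LFull ar Set.univ).Structure, Countable V →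
          Theory.Model V ((LFull ar Set.univ).completeTheory U) →
          ∃ i, Nonempty (V ≃[LFull ar Set.univ] rep i)) :=
  statement_15_general ar li hli_mono.monotone hli_cof M₀ hqe U ⟨hUhom, hUage⟩

end Ivanov
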